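/- arXiv:1912.10403 — 3 statements merged into one kernel-verified Lean document; each statement's English description precedes it below -/
import Mathlib

section
/- Let n ≥ 1 and m ≥ 1 be integers, let t_1,…,t_m be positive integers with t_1 + ⋯ + t_m = n, and let 0 < λ_1 < λ_2 < ⋯ < λ_m be real numbers. Then there exist real numbers m_j > 0, k_j > 0, b_j ≥ 0 (j = 1,…,n) such that the polynomial ∏_{i=1}^{m}(λ − λ_i)^{t_i} divides det(K − λ(M+B)) in ℝ[λ] if and only if t_i ≤ i for every i = 1,…,m. -/
open Polynomial

/-- The tridiagonal matrix of order `j` built from `k 1, …, k j` (1-indexed):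
diagonal entries `k r + k (r+1)` for `r < j`, last diagonal entry `k j`,
off-diagonal entries `-(k (r+1))`. -/
noncomputable def triMat (k : ℕ → ℝ) (j : ℕ) : Matrix (Fin j) (Fin j) ℝ :=
  Matrix.of fun r c =>
    if (r : ℕ) = (c : ℕ) then
      (if (r : ℕ) = j - 1 then k j else k ((r : ℕ) + 1) + k ((r : ℕ) + 2))
    else if (r : ℕ) + 1 = (c : ℕ) then -k ((c : ℕ) + 1)
    else if (c : ℕ) + 1 = (r : ℕ) then -k ((r : ℕ) + 1)
    else 0

/-- The matrix `K_j - λ (M_j + B_j)` with entries in `ℝ[λ]`. -/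
noncomputable def sysMat (m k b : ℕ → ℝ) (j : ℕ) :
    Matrix (Fin j) (Fin j) (Polynomial ℝ) :=
  (triMat k j).map Polynomial.C -
    (Polynomial.X : Polynomial ℝ) •
      ((Matrix.diagonal (fun i : Fin j => m ((i : ℕ) + 1)) + triMat b j).map Polynomial.C)

/-- `f_j(λ) = det (K_j - λ (M_j + B_j))`. -/
noncomputable def fpoly (m k b : ℕ → ℝ) (j : ℕ) : Polynomial ℝ :=
  (sysMat m k b j).det

/-- `g_j(λ)`: the leading principal minor of order `j-1` of `K_j - λ (M_j + B_j)`
(so `g 1 = 1`, the determinant of the empty matrix). -/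
noncomputable def gpoly (m k b : ℕ → ℝ) (j : ℕ) : Polynomial ℝ :=
  ((sysMat m k b j).submatrix (Fin.castLE (Nat.sub_le j 1))
    (Fin.castLE (Nat.sub_le j 1))).det


namespace MSI

section Tri
variable {R : Type*} [CommRing R]

def T (d c : ℕ → R) (n : ℕ) : Matrix (Fin n) (Fin n) R :=
  Matrix.of fun r s =>
    if (r : ℕ) = (s : ℕ) then d r
    else if (r : ℕ) + 1 = (s : ℕ) then -c s
    else if (s : ℕ) + 1 = (r : ℕ) then -c r
    else 0

lemma T_congr (d d' c : ℕ → R) (n : ℕ) (h : ∀ i < n, d i = d' i) : T d c n = T d' c n := by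
  ext r s
  simp only [T, Matrix.of_apply]
  split_ifs <;> first | rfl | exact h _ r.2

lemma T_det (d c : ℕ → R) (n : ℕ) :
    (T d c (n+2)).det = d (n+1) * (T d c (n+1)).det - c (n+1) ^ 2 * (T d c n).det := by
  rw [Matrix.det_succ_row _ (Fin.last (n+1)), Fin.sum_univ_castSucc, Fin.sum_univ_castSucc]
  have h0 : ∀ i : Fin n, T d c (n+2) (Fin.last (n+1)) i.castSucc.castSucc = 0 := by
    intro i
    have := i.2
    simp only [T, Matrix.of_apply, Fin.val_last, Fin.val_castSucc]
    rw [if_neg (by omega), if_neg (by omega), if_neg (by omega)]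
  have h1 : T d c (n+2) (Fin.last (n+1)) (Fin.last n).castSucc = - c (n+1) := by
    simp [T]
    intro h
    omega
  have h2 : T d c (n+2) (Fin.last (n+1)) (Fin.last (n+1)) = d (n+1) := by
    simp [T]
  have h3 : ((T d c (n+2)).submatrix (Fin.last (n+1)).succAbove (Fin.last (n+1)).succAbove)
      = T d c (n+1) := by
    ext r s
    simp [T, Fin.succAbove_last]
  have h4 : ((T d c (n+2)).submatrix (Fin.last (n+1)).succAbove
      (Fin.last n).castSucc.succAbove).det = - c (n+1) * (T d c n).det := by
    rw [Matrix.det_succ_column _ (Fin.last n), Fin.sum_univ_castSucc]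
    have e : (Fin.last n).castSucc.succAbove (Fin.last n) = Fin.last (n+1) := by
      rw [Fin.succAbove_castSucc_self]; rfl
    have e0 : ∀ i : Fin n, (T d c (n+2)).submatrix (Fin.last (n+1)).succAbove
      (Fin.last n).castSucc.succAbove i.castSucc (Fin.last n) = 0 := by
      intro i
      have := i.2
      simp only [Matrix.submatrix_apply, e, Fin.succAbove_last, T, Matrix.of_apply, Fin.val_last,
        Fin.val_castSucc]
      rw [if_neg (by omega), if_neg (by omega), if_neg (by omega)]
    have e1 : (T d c (n+2)).submatrix (Fin.last (n+1)).succAbove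
      (Fin.last n).castSucc.succAbove (Fin.last n) (Fin.last n) = - c (n+1) := by
      simp only [Matrix.submatrix_apply, e, Fin.succAbove_last, T, Matrix.of_apply, Fin.val_last,
        Fin.val_castSucc]
      simp
    have e2 : (((T d c (n+2)).submatrix (Fin.last (n+1)).succAbove
      (Fin.last n).castSucc.succAbove).submatrix (Fin.last n).succAbove (Fin.last n).succAbove)
        = T d c n := by
      ext r s
      have : (Fin.last n).castSucc.succAbove s.castSucc = s.castSucc.castSucc := by
        rw [Fin.succAbove_of_castSucc_lt]
        simp [Fin.lt_def]
      simp [Fin.succAbove_last, this, T]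
    rw [e1, e2]
    simp only [e0]
    simp [← two_mul]
  rw [h1, h2, h3, h4]
  simp only [h0]
  have e5 : ((-1 : R)) ^ (n * 2) = 1 := by rw [mul_comm, pow_mul]; simp
  simp [← two_mul, pow_add, pow_mul]
  ring_nf
  rw [e5]
  ring

end Tri

/-- polynomial `k j - λ b j` -/
noncomputable def pp (k b : ℕ → ℝ) (j : ℕ) : ℝ[X] := C (k j) - X * C (b j)

/-- recursion pair -/
noncomputable def fg (m k b : ℕ → ℝ) : ℕ → ℝ[X] × ℝ[X]
  | 0 => (1, 0)
  | j+1 => (pp k b (j+1) * (fg m k b j).1 - X * C (m (j+1)) *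
        ((fg m k b j).1 + pp k b (j+1) * (fg m k b j).2),
      (fg m k b j).1 + pp k b (j+1) * (fg m k b j).2)

noncomputable def dd (m k b : ℕ → ℝ) (r : ℕ) : ℝ[X] :=
  pp k b (r+1) + pp k b (r+2) - X * C (m (r+1))

lemma sysMat_eq (m k b : ℕ → ℝ) (j : ℕ) :
    sysMat m k b (j+1) = T (fun r => if r = j then pp k b (j+1) - X * C (m (j+1)) else
      dd m k b r) (fun s => pp k b (s+1)) (j+1) := by
  ext1 r s
  simp only [sysMat, triMat, T, Matrix.sub_apply, Matrix.map_apply, Matrix.of_apply,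
    Matrix.smul_apply, Matrix.add_apply, Matrix.diagonal_apply, Fin.ext_iff, dd, pp,
    Nat.add_sub_cancel, smul_eq_mul]
  split_ifs with h1 h2 h3 h4
  · simp only [map_add, h2]; ring
  · simp only [map_add]; ring
  · simp only [map_add, map_neg, map_zero]; ring
  · simp only [map_add, map_neg, map_zero]; ring
  · simp

lemma det_fg (m k b : ℕ → ℝ) (j : ℕ) :
    (T (dd m k b) (fun s => pp k b (s+1)) j).det = (fg m k b (j+1)).2 ∧
    fpoly m k b j = (fg m k b j).1 := by
  have key : ∀ j, fpoly m k b (j+1) = (T (dd m k b) (fun s => pp k b (s+1)) (j+1)).det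
      - pp k b (j+2) * (T (dd m k b) (fun s => pp k b (s+1)) j).det := by
    intro j
    rw [fpoly, sysMat_eq]
    cases j with
    | zero =>
      simp [T, dd]
      ring
    | succ j =>
      rw [T_det, T_det]
      rw [T_congr _ (dd m k b) _ (j+1) (fun i hi => if_neg (by omega)),
        T_congr _ (dd m k b) _ j (fun i hi => if_neg (by omega))]
      simp [dd]
      ring
  have rec2 : ∀ j, fpoly m k b (j+1) = pp k b (j+1) * fpoly m k b j -
      X * C (m (j+1)) * (T (dd m k b) (fun s => pp k b (s+1)) j).det := by
    intro j
    cases j with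
    | zero =>
      rw [fpoly, sysMat_eq]
      simp [T, fpoly]
    | succ j =>
      rw [key j, fpoly, sysMat_eq, T_det]
      rw [T_congr _ (dd m k b) _ (j+1) (fun i hi => if_neg (by omega)),
        T_congr _ (dd m k b) _ j (fun i hi => if_neg (by omega))]
      simp
      ring
  induction j with
  | zero => simp [T, fg, fpoly]
  | succ j ih =>
    have h2 : fpoly m k b (j+1) = (fg m k b (j+1)).1 := by
      rw [rec2, ih.1, ih.2]; simp [fg]
    refine ⟨?_, h2⟩
    have := key j
    rw [fg]
    simp only
    rw [← h2, ← ih.1, this]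
    ring

lemma fpoly_eq (m k b : ℕ → ℝ) (j : ℕ) : fpoly m k b j = (fg m k b j).1 := (det_fg m k b j).2

open Filter Topology

lemma fg_congr {m k b m' k' b' : ℕ → ℝ} {n : ℕ} (hm : ∀ j, j ≤ n → m j = m' j)
    (hk : ∀ j, j ≤ n → k j = k' j) (hb : ∀ j, j ≤ n → b j = b' j) :
    fg m k b n = fg m' k' b' n := by
  induction n with
  | zero => rfl
  | succ n ih =>
    rw [fg, fg, ih (fun j hj => hm j (by omega)) (fun j hj => hk j (by omega))
      (fun j hj => hb j (by omega)), pp, pp, hm _ le_rfl, hk _ le_rfl, hb _ le_rfl]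

/-- realizability by a chain of length `n`, with common factor a multiple of `P`. -/
def Rl (n : ℕ) (P : ℝ[X]) (x : ℝ[X] × ℝ[X]) : Prop :=
  ∃ m k b : ℕ → ℝ, (∀ j, 1 ≤ j → j ≤ n → 0 < m j) ∧ (∀ j, 1 ≤ j → j ≤ n → 0 < k j) ∧
    (∀ j, 1 ≤ j → j ≤ n → 0 ≤ b j) ∧
    ∃ E : ℝ[X], P ∣ E ∧ (fg m k b n).1 = E * x.1 ∧ (fg m k b n).2 = E * x.2

lemma Rl_ext {n : ℕ} {P : ℝ[X]} {x : ℝ[X] × ℝ[X]} (h : Rl n P x) (m0 k0 b0 : ℝ)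
    (hm0 : 0 < m0) (hk0 : 0 < k0) (hb0 : 0 ≤ b0) (P' : ℝ[X]) (y : ℝ[X] × ℝ[X]) (E' : ℝ[X])
    (hP : ∀ E, P ∣ E → P' ∣ E * E')
    (h2 : x.1 + (C k0 - X * C b0) * x.2 = E' * y.2)
    (h1 : (C k0 - X * C b0) * x.1 - X * C m0 * (x.1 + (C k0 - X * C b0) * x.2) = E' * y.1) :
    Rl (n+1) P' y := by
  obtain ⟨m, k, b, hm, hk, hb, E, hE, hf, hg⟩ := h
  have key : ∀ (q : ℕ → ℝ) (q0 : ℝ), ∀ j, j ≤ n → Function.update q (n+1) q0 j = q j := by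
    intro q q0 j hj
    rw [Function.update_of_ne (by omega)]
  refine ⟨Function.update m (n+1) m0, Function.update k (n+1) k0, Function.update b (n+1) b0,
    ?_, ?_, ?_, E * E', hP _ hE, ?_, ?_⟩
  · intro j h1 h2
    rcases Nat.lt_or_ge n j with h | h
    · obtain rfl : j = n + 1 := by omega
      simpa using hm0
    · rw [key _ _ _ h]; exact hm j h1 h
  · intro j h1 h2
    rcases Nat.lt_or_ge n j with h | h
    · obtain rfl : j = n + 1 := by omega
      simpa using hk0
    · rw [key _ _ _ h]; exact hk j h1 h
  · intro j h1 h2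
    rcases Nat.lt_or_ge n j with h | h
    · obtain rfl : j = n + 1 := by omega
      simpa using hb0
    · rw [key _ _ _ h]; exact hb j h1 h
  all_goals
    rw [fg, fg_congr (key m m0) (key k k0) (key b b0), hf, hg, pp]
    simp only [Function.update_self]
  · linear_combination E * h1
  · linear_combination E * h2

lemma Rl_b {n : ℕ} {P F G N : ℝ[X]} {lam m b : ℝ} (hl : 0 < lam) (hm : 0 < m) (hb : 0 < b)
    (hS : F + C m * (X * G) = (C lam - X) * N)
    (h : Rl n P (F + C m * (X * G), G - C b⁻¹ * N)) : Rl (n+1) (P * (X - C lam)) (F, G) := by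
  have hbb : (C b : ℝ[X]) * C b⁻¹ = 1 := by rw [← C_mul, mul_inv_cancel₀ hb.ne', C_1]
  refine Rl_ext h m (b * lam) b hm (by positivity) hb.le _ _ (C b * (C lam - X)) ?_ ?_ ?_
  · intro E hE
    exact mul_dvd_mul hE ⟨- C b, by ring⟩
  · simp only [C_mul]
    linear_combination hS - (C lam - X) * N * hbb
  · simp only [C_mul]
    linear_combination (- X * C m) * hS + X * C m * (C lam - X) * N * hbb

lemma Rl_a {n : ℕ} {P F G : ℝ[X]} {m k : ℝ} (hm : 0 < m) (hk : 0 < k)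
    (h : Rl n P (F + C m * (X * G), G - C k⁻¹ * (F + C m * (X * G)))) :
    Rl (n+1) P (F, G) := by
  have hbb : (C k : ℝ[X]) * C k⁻¹ = 1 := by rw [← C_mul, mul_inv_cancel₀ hk.ne', C_1]
  refine Rl_ext h m k 0 hm hk le_rfl _ _ (C k) ?_ ?_ ?_
  · intro E hE
    exact dvd_mul_of_dvd_left hE _
  · simp only [C_0]
    linear_combination  - (F + C m * (X * G)) * hbb
  · simp only [C_0]
    linear_combination X * C m * (F + C m * (X * G)) * hbb

lemma Rl_scale {n : ℕ} {P F G : ℝ[X]} {c : ℝ} (h : Rl n P (C c * F, C c * G)) :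
    Rl n P (F, G) := by
  obtain ⟨m, k, b, hm, hk, hb, E, hE, hf, hg⟩ := h
  refine ⟨m, k, b, hm, hk, hb, E * C c, dvd_mul_of_dvd_left hE _, ?_, ?_⟩
  · rw [hf]; ring
  · rw [hg]; ring

/-- coefficientwise topology -/
instance polyTop : TopologicalSpace ℝ[X] :=
  TopologicalSpace.induced (fun (p : ℝ[X]) (i : ℕ) => p.coeff i) inferInstance

lemma tends_iff {ι : Type*} {l : Filter ι} {f : ι → ℝ[X]} {p : ℝ[X]} :
    Tendsto f l (𝓝 p) ↔ ∀ i, Tendsto (fun t => (f t).coeff i) l (𝓝 (p.coeff i)) := by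
  rw [nhds_induced, tendsto_comap_iff, tendsto_pi_nhds]
  rfl

section tends
variable {ι : Type*} {l : Filter ι}

lemma tends_coeff {f : ι → ℝ[X]} {p : ℝ[X]} (h : Tendsto f l (𝓝 p)) (i : ℕ) :
    Tendsto (fun t => (f t).coeff i) l (𝓝 (p.coeff i)) := tends_iff.1 h i

lemma tends_add {f g : ι → ℝ[X]} {p q : ℝ[X]} (h : Tendsto f l (𝓝 p)) (h' : Tendsto g l (𝓝 q)) :
    Tendsto (fun t => f t + g t) l (𝓝 (p + q)) := by
  rw [tends_iff] at *
  intro i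
  simpa using (h i).add (h' i)

lemma tends_sub {f g : ι → ℝ[X]} {p q : ℝ[X]} (h : Tendsto f l (𝓝 p)) (h' : Tendsto g l (𝓝 q)) :
    Tendsto (fun t => f t - g t) l (𝓝 (p - q)) := by
  rw [tends_iff] at *
  intro i
  simpa using (h i).sub (h' i)

lemma tends_mul {f g : ι → ℝ[X]} {p q : ℝ[X]} (h : Tendsto f l (𝓝 p)) (h' : Tendsto g l (𝓝 q)) :
    Tendsto (fun t => f t * g t) l (𝓝 (p * q)) := by
  rw [tends_iff] at *
  intro i
  simp only [coeff_mul]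
  exact tendsto_finsetSum _ fun x _ => (h x.1).mul (h' x.2)

lemma tends_C {f : ι → ℝ} {p : ℝ} (h : Tendsto f l (𝓝 p)) :
    Tendsto (fun t => (C (f t) : ℝ[X])) l (𝓝 (C p)) := by
  rw [tends_iff]
  intro i
  simp only [coeff_C]
  split_ifs
  · exact h
  · exact tendsto_const_nhds

/-- division by a linear factor is continuous -/
lemma tends_div {f : ι → ℝ[X]} {p : ℝ[X]} {a : ℝ} (ha : a ≠ 0)
    (h : Tendsto (fun t => (C a - X) * f t) l (𝓝 ((C a - X) * p))) : Tendsto f l (𝓝 p) := by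
  rw [tends_iff] at *
  intro i
  induction i with
  | zero =>
    have := (h 0).const_mul a⁻¹
    simp only [sub_mul, coeff_sub, mul_coeff_zero, coeff_X_zero, zero_mul, sub_zero, coeff_C_zero,
      inv_mul_cancel_left₀ ha] at this
    exact this
  | succ i ih =>
    have := ((h (i+1)).add ih).const_mul a⁻¹
    simp only [sub_mul, coeff_sub, coeff_C_mul, coeff_X_mul, sub_add_cancel,
      inv_mul_cancel_left₀ ha] at this
    exact this

end tends

def Small (F : ℝ[X]) (r : ℕ) : Prop := ∀ i, r ≤ i → F.coeff i = 0

lemma Small.add {F G : ℝ[X]} {r : ℕ} (hF : Small F r) (hG : Small G r) : Small (F + G) r := by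
  intro i hi; simp [hF i hi, hG i hi]

lemma Small.sub {F G : ℝ[X]} {r : ℕ} (hF : Small F r) (hG : Small G r) : Small (F - G) r := by
  intro i hi; simp [hF i hi, hG i hi]

lemma Small.C_mul {F : ℝ[X]} {r : ℕ} (hF : Small F r) (c : ℝ) : Small (C c * F) r := by
  intro i hi; simp [hF i hi]

lemma Small.X_mul {F : ℝ[X]} {r : ℕ} (hF : Small F r) : Small (X * F) (r+1) := by
  intro i hi
  obtain ⟨j, rfl⟩ : ∃ j, i = j + 1 := ⟨i - 1, by omega⟩
  rw [coeff_X_mul]; exact hF j (by omega)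

lemma Small.mono {F : ℝ[X]} {r s : ℕ} (hF : Small F r) (h : r ≤ s) : Small F s :=
  fun i hi => hF i (h.trans hi)

lemma Small.lower {F : ℝ[X]} {r : ℕ} (hF : Small F (r+1)) (h : F.coeff r = 0) : Small F r := by
  intro i hi
  rcases hi.eq_or_lt with h' | h'
  · exact h' ▸ h
  · exact hF i h'

lemma Small.div {F : ℝ[X]} {r : ℕ} {a : ℝ} (hF : Small ((C a - X) * F) (r+1)) : Small F r := by
  have h1 : ((C a - X) * F).degree < ((r+1 : ℕ) : WithBot ℕ) :=
    (degree_lt_iff_coeff_zero _ _).2 hF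
  refine (degree_lt_iff_coeff_zero _ _).1 ?_
  have h2 : (C a - X : ℝ[X]) = -(X - C a) := by ring
  rw [h2, neg_mul, degree_neg, degree_mul, degree_X_sub_C] at h1
  by_cases h0 : F = 0
  · simp [h0]
  · rw [degree_eq_natDegree h0] at h1 ⊢
    norm_cast at *
    omega

lemma Small.eval {F : ℝ[X]} {r : ℕ} (hF : Small F r) (x : ℝ) :
    F.eval x = ∑ i ∈ Finset.range r, F.coeff i * x ^ i := by
  by_cases h0 : F = 0
  · simp [h0]
  refine eval_eq_sum_range' ?_ x
  have h1 : F.degree < (r : WithBot ℕ) := (degree_lt_iff_coeff_zero _ _).2 hF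
  exact (natDegree_lt_iff_degree_lt h0).2 h1

lemma tends_eval {ι : Type*} {l : Filter ι} {f : ι → ℝ[X]} {p : ℝ[X]} {r : ℕ}
    (h : Tendsto f l (𝓝 p)) (hf : ∀ᶠ t in l, Small (f t) r) (hp : Small p r) (x : ℝ) :
    Tendsto (fun t => (f t).eval x) l (𝓝 (p.eval x)) := by
  have h1 : Tendsto (fun t => ∑ i ∈ Finset.range r, (f t).coeff i * x ^ i) l (𝓝 (p.eval x)) := by
    rw [hp.eval]
    exact tendsto_finsetSum _ fun i _ => (tends_coeff h i).mul_const _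
  refine h1.congr' ?_
  filter_upwards [hf] with t ht
  rw [ht.eval]

def Dom (r : ℕ) (x : ℝ[X] × ℝ[X]) : Prop := Small x.1 (r+1) ∧ Small x.2 r

/-- robust realizability -/
def Good (n : ℕ) (P : ℝ[X]) (r : ℕ) (x : ℝ[X] × ℝ[X]) : Prop :=
  Dom r x ∧ ∀ᶠ y in 𝓝 x, Dom r y → Rl n P y

lemma Good.eventually {n r : ℕ} {P : ℝ[X]} {x : ℝ[X] × ℝ[X]} (h : Good n P r x) {ι : Type*}
    {l : Filter ι} {f : ι → ℝ[X] × ℝ[X]} (hf : Tendsto f l (𝓝 x))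
    (hd : ∀ᶠ t in l, Dom r (f t)) : ∀ᶠ t in l, Good n P r (f t) := by
  filter_upwards [hd, hf.eventually (eventually_eventually_nhds.2 h.2)] with t h1 h2
  exact ⟨h1, h2⟩

lemma Good.rl {n r : ℕ} {P : ℝ[X]} {x : ℝ[X] × ℝ[X]} (h : Good n P r x) : Rl n P x :=
  h.2.self_of_nhds h.1

/-- filter way of proving goodness -/
lemma Good.mk' {n r : ℕ} {P : ℝ[X]} {F G : ℝ[X]} (hF : Small F (r+1)) (hG : Small G r)
    (h : ∀ (l : Filter (ℝ[X] × ℝ[X])), Tendsto Prod.fst l (𝓝 F) → Tendsto Prod.snd l (𝓝 G) →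
      (∀ᶠ y in l, Small y.1 (r+1)) → (∀ᶠ y in l, Small y.2 r) → ∀ᶠ y in l, Rl n P (y.1, y.2)) :
    Good n P r (F, G) := by
  refine ⟨⟨hF, hG⟩, ?_⟩
  have := h (𝓝 (F, G) ⊓ 𝓟 {y | Dom r y}) ((continuous_fst.tendsto _).mono_left inf_le_left)
    ((continuous_snd.tendsto _).mono_left inf_le_left)
    (by rw [eventually_inf_principal]; exact Eventually.of_forall fun y hy => hy.1)
    (by rw [eventually_inf_principal]; exact Eventually.of_forall fun y hy => hy.2)
  rw [eventually_inf_principal] at this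
  exact this

lemma Good_zero : Good 0 1 0 (1, 0) := by
  refine Good.mk' ?_ ?_ ?_
  · intro i hi; rw [coeff_one, if_neg (by omega)]
  · intro i hi; simp
  · intro l h1 h2 h3 h4
    have := (tends_coeff h1 0).eventually_ne (show (1 : ℝ[X]).coeff 0 ≠ 0 by simp)
    filter_upwards [this, h3, h4] with y hy1 hy2 hy3
    refine ⟨fun _ => 1, fun _ => 1, fun _ => 1, by simp, by simp, by simp,
      C (y.1.coeff 0)⁻¹, one_dvd _, ?_, ?_⟩
    · have : y.1 = C (y.1.coeff 0) := by
        ext i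
        rw [coeff_C]
        split_ifs with h
        · rw [h]
        · exact hy2 i (by omega)
      simp only [fg]
      conv_rhs => rw [this]
      rw [← C_mul, coeff_C_zero, inv_mul_cancel₀ hy1, C_1]
    · have : y.2 = 0 := by
        ext i
        simpa using hy3 i (by omega)
      simp [fg, this]

lemma Good_scale {n r : ℕ} {P F G : ℝ[X]} {c : ℝ} (hc : c ≠ 0)
    (h : Good n P r (C c * F, C c * G)) : Good n P r (F, G) := by
  have e : ∀ F : ℝ[X], C c⁻¹ * (C c * F) = F := by
    intro F
    rw [← mul_assoc, ← C_mul, inv_mul_cancel₀ hc, C_1, one_mul]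
  have hF := h.1.1.C_mul c⁻¹
  have hG := h.1.2.C_mul c⁻¹
  simp only [e] at hF hG
  refine Good.mk' hF hG ?_
  intro l h1 h2 h3 h4
  have t1 := tends_mul (tendsto_const_nhds (x := (C c : ℝ[X])) (f := l)) h1
  have t2 := tends_mul (tendsto_const_nhds (x := (C c : ℝ[X])) (f := l)) h2
  have := h.eventually (t1.prodMk_nhds t2) (by
    filter_upwards [h3, h4] with y h3 h4
    exact ⟨h3.C_mul c, h4.C_mul c⟩)
  filter_upwards [this] with y hy
  exact Rl_scale hy.rl

lemma Good_b {n r : ℕ} {P F G : ℝ[X]} {lam q : ℝ} (hl : 0 < lam) (hq : 0 < q)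
    (hG : G.eval lam ≠ 0) (hFG : F.eval lam = - lam * q * G.eval lam)
    (hF1 : Small F (r+1))
    (h : Good n P r (F + C q * (X * G), G)) : Good (n+1) (P * (X - C lam)) r (F, G) := by
  have hG1 : Small G r := h.1.2
  -- division
  have hdiv : ∀ S : ℝ[X], S.eval lam = 0 → ∃ N, S = (C lam - X) * N := by
    intro S hS
    obtain ⟨N, hN⟩ := dvd_iff_isRoot.2 hS
    exact ⟨-N, by rw [hN]; ring⟩
  obtain ⟨N, hN⟩ := hdiv (F + C q * (X * G)) (by simp [hFG]; ring)
  have hNs : Small N r := by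
    refine Small.div (a := lam) ?_
    rw [← hN]; exact h.1.1
  -- choose b
  obtain ⟨b, hb, hgood⟩ : ∃ b : ℝ, 0 < b ∧ Good n P r (F + C q * (X * G), G - C b⁻¹ * N) := by
    have t : Tendsto (fun b : ℝ => (F + C q * (X * G), G - C b⁻¹ * N)) atTop
        (𝓝 (F + C q * (X * G), G)) := by
      refine tendsto_const_nhds.prodMk_nhds ?_
      have := tends_sub (tendsto_const_nhds (x := G) (f := (atTop : Filter ℝ)))
        (tends_mul (tends_C tendsto_inv_atTop_zero) (tendsto_const_nhds (x := N)))
      simpa using this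
    have := h.eventually t (Eventually.of_forall fun b => ⟨h.1.1, hG1.sub (hNs.C_mul _)⟩)
    exact ((eventually_gt_atTop 0).and this).exists
  refine Good.mk' hF1 hG1 ?_
  intro l h1 h2 h3 h4
  have e1 := tends_eval h1 h3 hF1 lam
  have e2 := tends_eval h2 h4 hG1 lam
  have hm : Tendsto (fun y : ℝ[X] × ℝ[X] => - (y.1.eval lam / (lam * y.2.eval lam))) l (𝓝 q) := by
    have := (e1.div (e2.const_mul lam) (mul_ne_zero hl.ne' hG)).neg
    have e : q = -(F.eval lam / (lam * G.eval lam)) := by rw [hFG]; field_simp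
    rw [e]; exact this
  have hS := tends_add h1 (tends_mul (tends_C hm)
    (tends_mul (tendsto_const_nhds (x := (X : ℝ[X]))) h2))
  have hG' := e2.eventually_ne hG
  have hdiv' : ∀ S : ℝ[X], ∃ N, S.eval lam = 0 → S = (C lam - X) * N := by
    intro S
    by_cases hS : S.eval lam = 0
    · obtain ⟨N, hN⟩ := hdiv S hS; exact ⟨N, fun _ => hN⟩
    · exact ⟨0, fun h => absurd h hS⟩
  choose dv hdv using hdiv'
  have hz : ∀ᶠ y in l, (y.1 + C (- (y.1.eval lam / (lam * y.2.eval lam))) * (X * y.2))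
      = (C lam - X) * dv (y.1 + C (- (y.1.eval lam / (lam * y.2.eval lam))) * (X * y.2)) := by
    filter_upwards [hG'] with y hy
    refine hdv _ ?_
    simp
    field_simp
    ring
  have hNt : Tendsto (fun y : ℝ[X] × ℝ[X] =>
      dv (y.1 + C (- (y.1.eval lam / (lam * y.2.eval lam))) * (X * y.2))) l (𝓝 N) := by
    refine tends_div hl.ne' ?_
    rw [← hN]
    exact hS.congr' hz
  have hsm : ∀ᶠ y in l, Dom r (y.1 + C (- (y.1.eval lam / (lam * y.2.eval lam))) * (X * y.2),
      y.2 - C b⁻¹ * dv (y.1 + C (- (y.1.eval lam / (lam * y.2.eval lam))) * (X * y.2))) := by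
    filter_upwards [h3, h4, hz] with y h3 h4 hz
    have s1 : Small (y.1 + C (- (y.1.eval lam / (lam * y.2.eval lam))) * (X * y.2)) (r+1) :=
      h3.add (h4.X_mul.C_mul _)
    refine ⟨s1, h4.sub (Small.C_mul (Small.div (a := lam) ?_) _)⟩
    rw [← hz]; exact s1
  have fin := hgood.eventually (hS.prodMk_nhds (tends_sub h2
    (tends_mul (tendsto_const_nhds (x := (C b⁻¹ : ℝ[X]))) hNt))) hsm
  filter_upwards [fin, hz, hm.eventually (lt_mem_nhds hq)] with y hy hz hq
  exact Rl_b hl hq hb hz hy.rl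

lemma Good_a {n r : ℕ} {P F G : ℝ[X]} {m k : ℝ} (hm : 0 < m) (hk : 0 < k)
    (hF : Small F (r+2)) (hG : Small G (r+1)) (hg : G.coeff r ≠ 0)
    (hmF : F.coeff (r+1) = - m * G.coeff r)
    (hkF : (F + C m * (X * G)).coeff r = k * G.coeff r)
    (h : Good n P r (F + C m * (X * G), G - C k⁻¹ * (F + C m * (X * G)))) :
    Good (n+1) P (r+1) (F, G) := by
  refine Good.mk' hF hG ?_
  intro l h1 h2 h3 h4
  have e1 := tends_coeff h1 (r+1)
  have e2 := tends_coeff h2 r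
  have tm : Tendsto (fun y : ℝ[X] × ℝ[X] => - (y.1.coeff (r+1) / y.2.coeff r)) l (𝓝 m) := by
    have := (e1.div e2 hg).neg
    have e : m = -(F.coeff (r+1) / G.coeff r) := by rw [hmF]; field_simp
    rw [e]; exact this
  set m1 : ℝ[X] × ℝ[X] → ℝ := fun y => - (y.1.coeff (r+1) / y.2.coeff r) with hm1
  have hS := tends_add h1 (tends_mul (tends_C tm)
    (tends_mul (tendsto_const_nhds (x := (X : ℝ[X]))) h2))
  set S1 : ℝ[X] × ℝ[X] → ℝ[X] := fun y => y.1 + C (m1 y) * (X * y.2) with hS1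
  have tk : Tendsto (fun y : ℝ[X] × ℝ[X] => (S1 y).coeff r / y.2.coeff r) l (𝓝 k) := by
    have := (tends_coeff hS r).div e2 hg
    rw [hkF, mul_div_cancel_right₀ _ hg] at this
    exact this
  set k1 : ℝ[X] × ℝ[X] → ℝ := fun y => (S1 y).coeff r / y.2.coeff r with hk1
  have tk' : Tendsto (fun y => (k1 y)⁻¹) l (𝓝 k⁻¹) := tk.inv₀ hk.ne'
  have tot := hS.prodMk_nhds (tends_sub h2 (tends_mul (tends_C tk') hS))
  have fin := h.eventually tot (by
    filter_upwards [h3, h4, e2.eventually_ne hg, tk.eventually (lt_mem_nhds hk)] with y h3 h4 hy hky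
    have s1 : Small (S1 y) (r+1) := by
      refine Small.lower (h3.add (h4.X_mul.C_mul _)) ?_
      simp only [S1, m1, coeff_add, coeff_C_mul, coeff_X_mul]
      field_simp
      ring
    refine ⟨s1, Small.lower (h4.sub (s1.C_mul _)) ?_⟩
    simp only [coeff_sub, coeff_C_mul]
    have hs : (S1 y).coeff r = k1 y * y.2.coeff r := by
      simp only [hk1]; field_simp
    have hky' : k1 y ≠ 0 := hky.ne'
    show y.2.coeff r - (k1 y)⁻¹ * (S1 y).coeff r = 0
    rw [hs]; field_simp; ring)
  filter_upwards [fin, tm.eventually (lt_mem_nhds hm), tk.eventually (lt_mem_nhds hk)] with y hy h1 h2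
  exact Rl_a h1 h2 hy.rl

lemma layer {mm n r : ℕ} {P S Γ : ℝ[X]} (lam q : Fin mm → ℝ) (hlam : ∀ j, 0 < lam j)
    (hq : StrictAnti q) (hqpos : ∀ j, 0 < q j) (hΓ : ∀ j, Γ.eval (lam j) ≠ 0)
    (hS : ∀ j, S.eval (lam j) = - lam j * q j * Γ.eval (lam j))
    (hgood : ∀ x, (x = 0 ∨ ∃ j, x = q j) → Good n P r (S + C x * (X * Γ), Γ))
    (J : Finset (Fin mm)) : ∀ x, (x = 0 ∨ ∃ j, x = q j) → (∀ j ∈ J, x < q j) →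
      Good (n + J.card) (P * ∏ j ∈ J, (X - C (lam j))) r (S + C x * (X * Γ), Γ) := by
  induction J using Finset.induction_on_max with
  | empty =>
    intro x hx _
    simpa using hgood x hx
  | insert a s hs ih =>
    intro x hx hlt
    have ha : a ∉ s := fun h => lt_irrefl _ (hs a h)
    have h1 := ih (q a) (Or.inr ⟨a, rfl⟩) (fun j hj => hq (hs j hj))
    rw [Finset.card_insert_of_notMem ha, Finset.prod_insert ha]
    have e : P * ((X - C (lam a)) * ∏ j ∈ s, (X - C (lam j))) =
      (P * ∏ j ∈ s, (X - C (lam j))) * (X - C (lam a)) := by ring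
    rw [e, ← add_assoc]
    have e2 : (S + C x * (X * Γ)) + C (q a - x) * (X * Γ) = S + C (q a) * (X * Γ) := by
      rw [C_sub]; ring
    refine Good_b (hlam a) (sub_pos.2 (hlt a (Finset.mem_insert_self _ _))) (hΓ a) ?_
      ((hgood x hx).1.1) ?_
    · simp [hS a]; ring
    · rw [e2]; exact h1

lemma alg_id {a x ε α D f g Q : ℝ} (hε : ε ≠ 0) (hD : D ≠ 0) (hdd : a = D + ε * α)
    (h : (a - x) * Q = a^2 * g + α * f) :
    (a - x) * (ε⁻¹ * (f + ε * Q - D⁻¹ * ((a - x) * f + x * (f + ε * Q)))) =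
      -(ε * α^2 / D) * f + a^2 * g * (1 - D⁻¹ * x) := by
  have e : a^2 * g = (a - x) * Q - α * f := by linarith
  rw [e]
  field_simp
  subst hdd
  ring

lemma step {mm n r : ℕ} {P F' G' : ℝ[X]} (h : Good n P r (F', G')) (hFr : F'.coeff r ≠ 0)
    {a : ℝ} (ha : 0 < a) (hFa : F'.eval a ≠ 0) (lam : Fin mm → ℝ) (hal : ∀ j, a < lam j)
    (hmono : StrictMono lam) (hF : ∀ j, F'.eval (lam j) = 0) (hG : ∀ j, G'.eval (lam j) ≠ 0)
    (J : Finset (Fin mm)) :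
    ∃ G, Good (n + J.card + 1) (P * ∏ j ∈ J, (X - C (lam j))) (r+1) ((C a - X) * F', G) ∧
      G.eval a ≠ 0 ∧ ∀ j, G.eval (lam j) ≠ 0 := by
  set α : ℝ := - (a ^ 2 * G'.eval a) / F'.eval a with hα
  obtain ⟨Q, hQ⟩ : ∃ Q, C (a^2) * G' + C α * F' = (C a - X) * Q := by
    have : (C (a^2) * G' + C α * F').eval a = 0 := by
      simp [hα]; field_simp; ring
    obtain ⟨N, hN⟩ := dvd_iff_isRoot.2 this
    exact ⟨-N, by rw [hN]; ring⟩
  have hQx : ∀ x, (a - x) * Q.eval x = a^2 * G'.eval x + α * F'.eval x := by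
    intro x
    have := congrArg (eval x) hQ
    simpa using this.symm
  have sF : Small F' (r+1) := h.1.1
  have sG : Small G' r := h.1.2
  have sQ : Small Q r := by
    refine Small.div (a := a) ?_
    rw [← hQ]
    exact ((sG.mono (Nat.le_succ _)).C_mul _).add (sF.C_mul _)
  -- families
  set d : ℝ → ℝ := fun ε => a - ε * α with hd
  set G : ℝ → ℝ[X] := fun ε => F' + C ε * Q with hGdef
  set S : ℝ → ℝ[X] := fun ε => (C a - X) * F' + X * G ε with hSdef
  set Γ : ℝ → ℝ[X] := fun ε => C ε⁻¹ * (G ε - C (d ε)⁻¹ * S ε) with hΓdef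
  have hΓe : ∀ ε, 0 < ε → 0 < d ε → (C a - X) * Γ ε =
      C (-(ε * α^2 / d ε)) * F' + C (a^2) * G' * (1 - C (d ε)⁻¹ * X) := by
    intro ε hε hdε
    refine Polynomial.funext fun x => ?_
    simp only [hΓdef, hSdef, hGdef, eval_mul, eval_sub, eval_add, eval_C, eval_X, eval_one]
    have := hQx x
    have hd0 := hdε.ne'
    have hdd : a = d ε + ε * α := by simp [hd]
    exact alg_id hε.ne' hd0 hdd this
  -- limits
  have tε : Tendsto (fun ε : ℝ => ε) (𝓝[>] 0) (𝓝 0) := tendsto_id.mono_left nhdsWithin_le_nhds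
  have pε : ∀ᶠ ε : ℝ in 𝓝[>] 0, 0 < ε := eventually_mem_nhdsWithin
  have td : Tendsto d (𝓝[>] 0) (𝓝 a) := by
    have := (tendsto_const_nhds (x := a)).sub (tε.mul_const α)
    simpa using this
  have pd : ∀ᶠ ε in 𝓝[>] 0, 0 < d ε := td.eventually (lt_mem_nhds ha)
  have pl : ∀ᶠ ε in 𝓝[>] 0, ∀ j, d ε < lam j := by
    rw [eventually_all]
    exact fun j => td.eventually (gt_mem_nhds (hal j))
  have tG : Tendsto G (𝓝[>] 0) (𝓝 F') := by
    have := tends_add (tendsto_const_nhds (x := F')) (tends_mul (tends_C tε)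
      (tendsto_const_nhds (x := Q)))
    simpa using this
  have tS : Tendsto S (𝓝[>] 0) (𝓝 (C a * F')) := by
    have := tends_add (tendsto_const_nhds (x := (C a - X) * F'))
      (tends_mul (tendsto_const_nhds (x := (X : ℝ[X]))) tG)
    have e : (C a - X) * F' + X * F' = C a * F' := by ring
    rwa [e] at this
  have tΓ : Tendsto Γ (𝓝[>] 0) (𝓝 (C a * G')) := by
    refine tends_div ha.ne' ?_
    have t1 : Tendsto (fun ε => -(ε * α^2 / d ε)) (𝓝[>] 0) (𝓝 0) := by
      have := ((tε.mul_const (α^2)).div td ha.ne').neg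
      simpa using this
    have t2 := tends_add (tends_mul (tends_C t1) (tendsto_const_nhds (x := F')))
      (tends_mul (tendsto_const_nhds (x := C (a^2) * G')) (tends_sub
        (tendsto_const_nhds (x := (1 : ℝ[X])))
        (tends_mul (tends_C (td.inv₀ ha.ne')) (tendsto_const_nhds (x := (X : ℝ[X]))))))
    have e : C 0 * F' + C (a^2) * G' * (1 - C a⁻¹ * X) = (C a - X) * (C a * G') := by
      have : (C a : ℝ[X]) * C a⁻¹ = 1 := by rw [← C_mul, mul_inv_cancel₀ ha.ne', C_1]
      simp only [C_0, C_pow]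
      linear_combination (- C a * G' * X) * this
    rw [e] at t2
    refine t2.congr' ?_
    filter_upwards [pε, pd] with ε h1 h2
    exact (hΓe ε h1 h2).symm
  have sGε : ∀ ε, Small (G ε) (r+1) := fun ε => sF.add ((sQ.mono (Nat.le_succ _)).C_mul _)
  have sS : ∀ ε, Small (S ε) (r+1) := by
    intro ε
    have : S ε = C a * F' + C ε * (X * Q) := by simp only [hSdef, hGdef]; ring
    rw [this]
    exact (sF.C_mul _).add (sQ.X_mul.C_mul _)
  have sΓ : ∀ ε, 0 < ε → 0 < d ε → Small (Γ ε) r := by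
    intro ε h1 h2
    refine Small.div (a := a) ?_
    rw [hΓe ε h1 h2]
    have : C (a^2) * G' * (1 - C (d ε)⁻¹ * X) = C (a^2) * (G' - C (d ε)⁻¹ * (X * G')) := by ring
    rw [this]
    exact (sF.C_mul _).add (((sG.mono (Nat.le_succ _)).sub (sG.X_mul.C_mul _)).C_mul _)
  have hgoodlim : Good n P r (C a * F', C a * G') := by
    refine Good_scale (c := a⁻¹) (inv_ne_zero ha.ne') ?_
    have e : ∀ F : ℝ[X], C a⁻¹ * (C a * F) = F := by
      intro F
      rw [← mul_assoc, ← C_mul, inv_mul_cancel₀ ha.ne', C_1, one_mul]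
    rwa [e, e]
  have good0 : ∀ y : ℝ → ℝ, Tendsto y (𝓝[>] 0) (𝓝 0) →
      ∀ᶠ ε in 𝓝[>] 0, Good n P r (S ε + C (y ε) * (X * Γ ε), Γ ε) := by
    intro y hy
    refine hgoodlim.eventually (Tendsto.prodMk_nhds ?_ tΓ) ?_
    · have := tends_add tS (tends_mul (tends_C hy) (tends_mul
        (tendsto_const_nhds (x := (X : ℝ[X]))) tΓ))
      simpa using this
    · filter_upwards [pε, pd] with ε h1 h2
      exact ⟨(sS ε).add ((sΓ ε h1 h2).X_mul.C_mul _), sΓ ε h1 h2⟩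
  have tq : ∀ j, Tendsto (fun ε => ε * d ε / (lam j - d ε)) (𝓝[>] 0) (𝓝 0) := by
    intro j
    have := (tε.mul td).div ((tendsto_const_nhds (x := lam j)).sub td) (sub_pos.2 (hal j)).ne'
    rw [zero_mul, zero_div] at this
    exact this
  have g1 := good0 _ tendsto_const_nhds
  have g2 : ∀ᶠ ε in 𝓝[>] 0, ∀ j, Good n P r (S ε + C (ε * d ε / (lam j - d ε)) * (X * Γ ε), Γ ε) := by
    rw [eventually_all]
    exact fun j => good0 _ (tq j)
  have g3 : ∀ᶠ ε in 𝓝[>] 0, (G ε).eval a ≠ 0 :=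
    (tends_eval tG (Eventually.of_forall sGε) sF a).eventually_ne hFa
  obtain ⟨ε, hε, hdε, hl, g1, g2, g3⟩ := (pε.and (pd.and (pl.and (g1.and (g2.and g3))))).exists
  have hlamne : ∀ j, a - lam j ≠ 0 := fun j => (sub_neg.2 (hal j)).ne
  have hΓj : ∀ j, (a - lam j) * (Γ ε).eval (lam j) = a^2 * G'.eval (lam j) * (1 - (d ε)⁻¹ * lam j) := by
    intro j
    have := congrArg (eval (lam j)) (hΓe ε hε hdε)
    simpa [hF j] using this
  have hSj : ∀ j, (a - lam j) * (S ε).eval (lam j) = ε * lam j * (a^2 * G'.eval (lam j)) := by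
    intro j
    have := hQx (lam j)
    rw [hF j] at this
    simp only [hSdef, hGdef, eval_mul, eval_sub, eval_add, eval_C, eval_X, hF j]
    linear_combination ε * lam j * this
  have hGj : ∀ j, (G ε).eval (lam j) ≠ 0 := by
    intro j h0
    have := hQx (lam j)
    rw [hF j] at this
    simp only [hGdef, eval_mul, eval_add, eval_C, hF j, zero_add] at h0
    rcases mul_eq_zero.1 h0 with h0 | h0
    · exact hε.ne' h0
    · rw [h0] at this
      have h3 : a^2 * eval (lam j) G' ≠ 0 := mul_ne_zero (by positivity) (hG j)
      apply h3
      linarith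
  have hlay := layer (n := n) (r := r) (P := P) (S := S ε) (Γ := Γ ε) lam
    (fun j => ε * d ε / (lam j - d ε)) (fun j => ha.trans (hal j))
    (by
      intro i j hij
      have h1 := hmono hij
      have h2 := hl i
      show ε * d ε / (lam j - d ε) < ε * d ε / (lam i - d ε)
      exact div_lt_div_of_pos_left (by positivity) (by linarith) (by linarith))
    (fun j => div_pos (by positivity) (sub_pos.2 (hl j)))
    (by
      intro j h0
      have := hΓj j
      rw [h0, mul_zero] at this
      have h3 : a^2 * eval (lam j) G' ≠ 0 := mul_ne_zero (by positivity) (hG j)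
      rcases mul_eq_zero.1 this.symm with h | h
      · exact h3 h
      · have := hl j
        field_simp at h
        linarith)
    (by
      intro j
      apply mul_left_cancel₀ (hlamne j)
      rw [hSj]
      have e : (a - lam j) * (-lam j * (ε * d ε / (lam j - d ε)) * (Γ ε).eval (lam j)) =
        (-lam j * (ε * d ε / (lam j - d ε))) * ((a - lam j) * (Γ ε).eval (lam j)) := by ring
      rw [e, hΓj]
      have h1 : lam j - d ε ≠ 0 := (sub_pos.2 (hl j)).ne'
      have h2 := hdε.ne'
      field_simp
      ring)
    (by
      rintro x (rfl | ⟨j, rfl⟩)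
      · exact g1
      · exact g2 j) J 0 (Or.inl rfl) (fun j _ => div_pos (by positivity) (sub_pos.2 (hl j)))
  rw [C_0, zero_mul, add_zero] at hlay
  have einv : ∀ F : ℝ[X], C ε⁻¹ * (C ε * F) = F := by
    intro F
    rw [← mul_assoc, ← C_mul, inv_mul_cancel₀ hε.ne', C_1, one_mul]
  have einv' : ∀ F : ℝ[X], C ε * (C ε⁻¹ * F) = F := by
    intro F
    rw [← mul_assoc, ← C_mul, mul_inv_cancel₀ hε.ne', C_1, one_mul]
  have hlay2 : Good (n + J.card) (P * ∏ j ∈ J, (X - C (lam j))) r (C ε * S ε, C ε * Γ ε) := by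
    refine Good_scale (inv_ne_zero hε.ne') ?_
    rwa [einv, einv]
  have hGr : (G ε).coeff r = F'.coeff r := by
    simp [hGdef, sQ r le_rfl]
  have hSr : (S ε).coeff r = d ε * (G ε).coeff r := by
    have := sΓ ε hε hdε r le_rfl
    simp only [hΓdef, coeff_C_mul, coeff_sub] at this
    have h2 := hdε.ne'
    rcases mul_eq_zero.1 this with h | h
    · exact absurd h (inv_ne_zero hε.ne')
    · field_simp at h
      linarith
  have eS : C ε * ((C a - X) * F') + C ε * (X * G ε) = C ε * S ε := by
    simp only [hSdef]; ring
  refine ⟨C ε⁻¹ * G ε, ?_, ?_, ?_⟩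
  · refine Good_scale hε.ne' ?_
    rw [einv']
    refine Good_a (m := ε) (k := ε * d ε) hε (by positivity) ?_ (sGε ε) (by rwa [hGr]) ?_ ?_ ?_
    · refine Small.C_mul ?_ _
      rw [sub_mul]
      exact ((sF.mono (Nat.le_succ _)).C_mul _).sub sF.X_mul
    · rw [hGr]
      simp [sub_mul, sF (r+1) le_rfl]
    · rw [eS, coeff_C_mul, hSr]; ring
    · rw [eS]
      have : G ε - C (ε * d ε)⁻¹ * (C ε * S ε) = C ε * Γ ε := by
        simp only [hΓdef]
        rw [einv', mul_inv, C_mul]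
        congr 1
        rw [mul_comm (C ε⁻¹) _, mul_assoc, einv]
      rw [this]
      exact hlay2
  · simp [g3, hε.ne']
  · intro j; simp [hGj j, hε.ne']

lemma exists_good : ∀ (mm : ℕ) (lam : Fin mm → ℝ) (_ : ∀ i, 0 < lam i) (_ : StrictMono lam)
    (s : Fin mm → ℕ) (_ : ∀ i, s i ≤ (i : ℕ)),
    ∃ G, Good (mm + ∑ i, s i) (∏ i, (X - C (lam i)) ^ s i) mm (∏ i, (C (lam i) - X), G) ∧
      (∏ i, (C (lam i) - X)).coeff mm ≠ 0 ∧ ∀ i, G.eval (lam i) ≠ 0 := by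
  intro mm
  induction mm with
  | zero =>
    intro lam _ _ s _
    exact ⟨0, by simpa using Good_zero, by simp, fun i => i.elim0⟩
  | succ mm ih =>
    intro lam hpos hmono s hs
    obtain ⟨G', hgood, hc, hG'⟩ := ih (fun i => lam i.succ) (fun i => hpos _)
      (hmono.comp (Fin.strictMono_succ)) (fun i => s i.succ - 1)
      (fun i => by have := hs i.succ; simp at this; omega)
    set F' : ℝ[X] := ∏ i : Fin mm, (C (lam i.succ) - X) with hF'
    set J : Finset (Fin mm) := Finset.univ.filter (fun i => 1 ≤ s i.succ) with hJ
    obtain ⟨G, h1, h2, h3⟩ := step hgood hc (hpos 0) (by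
        rw [hF', eval_prod, Finset.prod_ne_zero_iff]
        intro i _
        simp only [eval_sub, eval_C, eval_X]
        exact (sub_pos.2 (hmono (Fin.succ_pos i))).ne') (fun i => lam i.succ)
      (fun i => hmono (Fin.succ_pos i)) (hmono.comp (Fin.strictMono_succ))
      (by
        intro j
        rw [hF', eval_prod]
        exact Finset.prod_eq_zero (Finset.mem_univ j) (by simp)) hG' J
    have hs0 : s 0 = 0 := by have := hs 0; simpa using this
    refine ⟨G, ?_, ?_, ?_⟩
    · rw [Fin.prod_univ_succ, Fin.prod_univ_succ, Fin.sum_univ_succ, hs0, pow_zero, one_mul,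
        zero_add]
      have e1 : mm + ∑ i : Fin mm, (s i.succ - 1) + J.card + 1 = mm + 1 + ∑ i : Fin mm, s i.succ := by
        rw [hJ, Finset.card_filter]
        have : ∑ i : Fin mm, (s i.succ - 1) + (∑ i : Fin mm, if 1 ≤ s i.succ then 1 else 0)
            = ∑ i : Fin mm, s i.succ := by
          rw [← Finset.sum_add_distrib]
          refine Finset.sum_congr rfl fun i _ => ?_
          split_ifs <;> omega
        omega
      have e2 : (∏ i : Fin mm, (X - C (lam i.succ)) ^ (s i.succ - 1)) *
          ∏ j ∈ J, (X - C (lam j.succ)) = ∏ i : Fin mm, (X - C (lam i.succ)) ^ (s i.succ) := by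
        rw [hJ, Finset.prod_filter, ← Finset.prod_mul_distrib]
        refine Finset.prod_congr rfl fun i _ => ?_
        split_ifs with h
        · rw [← pow_succ]; congr 1; omega
        · have : s i.succ = 0 := by omega
          simp [this]
      rw [e1, e2] at h1
      exact h1
    · rw [Fin.prod_univ_succ, ← hF', sub_mul]
      simp [hgood.1.1 (mm+1) le_rfl, hc]
    · intro i
      refine Fin.cases h2 h3 i

lemma suff (n mm : ℕ) (t : Fin mm → ℕ) (ht : ∀ i, 0 < t i) (hsum : ∑ i, t i = n)
    (lam : Fin mm → ℝ) (hpos : ∀ i, 0 < lam i) (hmono : StrictMono lam)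
    (h : ∀ i : Fin mm, t i ≤ (i : ℕ) + 1) :
    ∃ m k b : ℕ → ℝ,
        (∀ j, 1 ≤ j → j ≤ n → 0 < m j) ∧
        (∀ j, 1 ≤ j → j ≤ n → 0 < k j) ∧
        (∀ j, 1 ≤ j → j ≤ n → 0 ≤ b j) ∧
        (∏ i, (Polynomial.X - Polynomial.C (lam i)) ^ t i) ∣ fpoly m k b n := by
  obtain ⟨G, hG, -, -⟩ := exists_good mm lam hpos hmono (fun i => t i - 1)
    (fun i => by have := h i; omega)
  have e : mm + ∑ i, (t i - 1) = n := by
    rw [← hsum]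
    have : ∑ i, t i = ∑ i, ((t i - 1) + 1) := Finset.sum_congr rfl fun i _ => by have := ht i; omega
    rw [this, Finset.sum_add_distrib]
    simp
    omega
  rw [e] at hG
  obtain ⟨m, k, b, hm, hk, hb, E, hE, hf, -⟩ := hG.rl
  refine ⟨m, k, b, hm, hk, hb, ?_⟩
  rw [fpoly_eq, hf]
  have : (∏ i, (X - C (lam i)) ^ t i) = (∏ i, (X - C (lam i)) ^ (t i - 1)) * ∏ i, (X - C (lam i)) := by
    rw [← Finset.prod_mul_distrib]
    refine Finset.prod_congr rfl fun i _ => ?_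
    rw [← pow_succ]; congr 1; have := ht i; omega
  rw [this]
  refine mul_dvd_mul hE ?_
  refine Finset.prod_dvd_prod_of_dvd _ _ fun i _ => ⟨-1, by ring⟩

/-- Wronskian of two polynomials at a point -/
noncomputable def Wr (A B : ℝ[X]) (x : ℝ) : ℝ :=
  (derivative A).eval x * B.eval x - A.eval x * (derivative B).eval x

lemma Wr_anti {A B : ℝ[X]} (h : ∀ x, Wr A B x < 0) {a b : ℝ}
    (hB : ∀ x ∈ Set.Icc a b, B.eval x ≠ 0) :
    StrictAntiOn (fun x => A.eval x / B.eval x) (Set.Icc a b) := by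
  apply strictAntiOn_of_deriv_neg (convex_Icc a b)
  · exact ContinuousOn.div A.continuous.continuousOn B.continuous.continuousOn hB
  · intro x hx
    have hx' := hB x (interior_subset hx)
    have := ((A.hasDerivAt x).div (B.hasDerivAt x) hx').deriv
    have e : deriv (fun x => A.eval x / B.eval x) x =
      ((derivative A).eval x * B.eval x - A.eval x * (derivative B).eval x) / (B.eval x)^2 := this
    rw [e]
    exact div_neg_of_neg_of_pos (h x) (by positivity)

lemma sturm {A B : ℝ[X]} (h : ∀ x, Wr A B x < 0) {a b : ℝ} (hab : a < b)
    (ha : A.eval a = 0) (hb : A.eval b = 0) : ∃ x, a < x ∧ x < b ∧ B.eval x = 0 := by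
  by_contra! hc
  have h1 : ∀ x, A.eval x = 0 → B.eval x ≠ 0 := by
    intro x hx hx'
    have := h x
    simp [Wr, hx, hx'] at this
  have hB : ∀ x ∈ Set.Icc a b, B.eval x ≠ 0 := by
    intro x hx
    rcases hx.1.eq_or_lt with e | e
    · exact h1 x (e ▸ ha)
    rcases hx.2.eq_or_lt with e' | e'
    · exact h1 x (e' ▸ hb)
    exact hc x e e'
  have := Wr_anti h hB (Set.left_mem_Icc.2 hab.le) (Set.right_mem_Icc.2 hab.le) hab
  simp [ha, hb] at this

lemma Wr_nz {A G : ℝ[X]} (h : ∀ x, Wr A G x < 0) {x : ℝ} (hA : A.eval x = 0) : G.eval x ≠ 0 := by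
  intro hx'
  have := h x
  simp [Wr, hA, hx'] at this

lemma Wr_sub {A G : ℝ[X]} {m : ℝ} (x : ℝ) : Wr (A - X * C m * G) G x = Wr A G x - m * (G.eval x)^2 := by
  simp [Wr]
  ring

lemma Wr_sub_neg {A G : ℝ[X]} (h : ∀ x, Wr A G x < 0) {m : ℝ} (hm : 0 < m) (x : ℝ) :
    Wr (A - X * C m * G) G x < 0 := by
  rw [Wr_sub]
  have := h x
  have : 0 ≤ m * (G.eval x)^2 := by positivity
  linarith [h x]

lemma Wr_mono {F G : ℝ[X]} (h : ∀ x, Wr F G x < 0) {a b : ℝ} (hab : a ≤ b)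
    (hF : ∀ x ∈ Set.Icc a b, F.eval x ≠ 0) {x y : ℝ} (hx : x ∈ Set.Icc a b) (hy : y ∈ Set.Icc a b)
    (hxy : x < y) : G.eval x / F.eval x < G.eval y / F.eval y := by
  have h' : ∀ x, Wr (-G) F x < 0 := by
    intro x
    have := h x
    simp only [Wr, derivative_neg, eval_neg] at this ⊢
    linarith
  have := Wr_anti h' hF hx hy hxy
  simp only [eval_neg, neg_div] at this
  linarith

lemma root_val {A G : ℝ[X]} (h : ∀ x, Wr A G x < 0) {m : ℝ} (hm : 0 < m) {x : ℝ} (hx : 0 < x)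
    (hA : A.eval x = 0) : (A - X * C m * G).eval x ≠ 0 ∧
      G.eval x / (A - X * C m * G).eval x < 0 := by
  have hG := Wr_nz h hA
  have e : (A - X * C m * G).eval x = - (x * m * G.eval x) := by
    simp only [eval_sub, eval_mul, eval_X, eval_C, hA]; ring
  rw [e]
  refine ⟨neg_ne_zero.2 (by positivity), ?_⟩
  have : G.eval x / -(x * m * G.eval x) = - (1 / (x * m)) := by field_simp
  rw [this]
  have : 0 < 1 / (x * m) := by positivity
  linarith

lemma between {A G : ℝ[X]} (h : ∀ x, Wr A G x < 0) {m : ℝ} (hm : 0 < m) {μ ν : ℝ} (hμ : 0 < μ)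
    (hμν : μ < ν) (h1 : A.eval μ = 0) (h2 : A.eval ν = 0) :
    ∃ x, μ < x ∧ x < ν ∧ (A - X * C m * G).eval x = 0 := by
  by_contra! hc
  have r1 := root_val h hm hμ h1
  have r2 := root_val h hm (hμ.trans hμν) h2
  have hF : ∀ x ∈ Set.Icc μ ν, (A - X * C m * G).eval x ≠ 0 := by
    intro x hx
    rcases hx.1.eq_or_lt with e | e
    · exact e ▸ r1.1
    rcases hx.2.eq_or_lt with e' | e'
    · exact e' ▸ r2.1
    exact hc x e e'
  obtain ⟨z, z1, z2, z3⟩ := sturm h hμν h1 h2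
  have := Wr_mono (Wr_sub_neg h hm) hμν.le hF ⟨z1.le, z2.le⟩ (Set.right_mem_Icc.2 hμν.le) z2
  rw [z3] at this
  simp only [zero_div] at this
  linarith [r2.2]

lemma first {A G : ℝ[X]} (h : ∀ x, Wr A G x < 0) {m : ℝ} (hm : 0 < m) {ν : ℝ} (hν : 0 < ν)
    (hA : 0 < A.eval 0) (hG : 0 < G.eval 0) (h2 : A.eval ν = 0) :
    ∃ x, 0 < x ∧ x < ν ∧ (A - X * C m * G).eval x = 0 := by
  by_contra! hc
  have r2 := root_val h hm hν h2
  have e0 : (A - X * C m * G).eval 0 = A.eval 0 := by simp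
  have hF : ∀ x ∈ Set.Icc 0 ν, (A - X * C m * G).eval x ≠ 0 := by
    intro x hx
    rcases hx.1.eq_or_lt with e | e
    · rw [← e, e0]; exact hA.ne'
    rcases hx.2.eq_or_lt with e' | e'
    · exact e' ▸ r2.1
    exact hc x e e'
  have := Wr_mono (Wr_sub_neg h hm) hν.le hF (Set.left_mem_Icc.2 hν.le)
    (Set.right_mem_Icc.2 hν.le) hν
  rw [e0] at this
  have h3 : 0 < G.eval 0 / A.eval 0 := by positivity
  linarith [r2.2]

lemma count {A G : ℝ[X]} (h : ∀ x, Wr A G x < 0) {m : ℝ} (hm : 0 < m)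
    (hA : 0 < A.eval 0) (hG : 0 < G.eval 0) (S : Finset ℝ) :
    (∀ x ∈ S, 0 < x ∧ A.eval x = 0) →
    ∃ T : Finset ℝ, S.card ≤ T.card ∧
      ∀ x ∈ T, 0 < x ∧ (A - X * C m * G).eval x = 0 ∧ ∃ s ∈ S, x < s := by
  induction S using Finset.induction_on_max with
  | empty => intro _; exact ⟨∅, by simp⟩
  | insert a s hs ih =>
    intro hS
    obtain ⟨T, hT, hT'⟩ := ih fun x hx => hS x (Finset.mem_insert_of_mem hx)
    have ha := hS a (Finset.mem_insert_self _ _)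
    have : ∃ z, 0 < z ∧ z < a ∧ (A - X * C m * G).eval z = 0 ∧ ∀ y ∈ s, y < z := by
      rcases s.eq_empty_or_nonempty with e | e
      · obtain ⟨z, z1, z2, z3⟩ := first h hm ha.1 hA hG ha.2
        exact ⟨z, z1, z2, z3, by simp [e]⟩
      · have hM := hS _ (Finset.mem_insert_of_mem (s.max'_mem e))
        obtain ⟨z, z1, z2, z3⟩ := between h hm hM.1 (hs _ (s.max'_mem e)) hM.2 ha.2
        exact ⟨z, hM.1.trans z1, z2, z3, fun y hy => (s.le_max' y hy).trans_lt z1⟩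
    obtain ⟨z, z1, z2, z3, z4⟩ := this
    have hz : z ∉ T := by
      intro hz
      obtain ⟨-, -, y, hy, hzy⟩ := hT' z hz
      exact absurd (z4 y hy) (not_lt.2 hzy.le)
    refine ⟨insert z T, ?_, ?_⟩
    · rw [Finset.card_insert_of_notMem hz]
      exact (Finset.card_insert_le _ _).trans (by omega)
    · intro x hx
      rcases Finset.mem_insert.1 hx with rfl | hx
      · exact ⟨z1, z3, a, Finset.mem_insert_self _ _, z2⟩
      · obtain ⟨x1, x2, y, hy, hxy⟩ := hT' x hx
        exact ⟨x1, x2, y, Finset.mem_insert_of_mem hy, hxy⟩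

/-- invariant for necessity -/
def Inv (L : ℝ) (f g : ℝ[X]) : Prop :=
  ∃ (D F G : ℝ[X]) (e : ℕ) (T : Finset ℝ), f = (X - C L)^e * D * F ∧ g = (X - C L)^e * D * G ∧
    D.eval L ≠ 0 ∧ (∀ x, Wr F G x < 0) ∧ 0 < F.eval 0 ∧ 0 < G.eval 0 ∧
    (∀ x ∈ T, 0 < x ∧ x < L ∧ F.eval x = 0) ∧ e ≤ T.card

lemma Inv_mk {L m : ℝ} (hm : 0 < m) {A G D : ℝ[X]} {e : ℕ} {S : Finset ℝ}
    (hD : D.eval L ≠ 0) (h : ∀ x, Wr A G x < 0) (hA : 0 < A.eval 0) (hG : 0 < G.eval 0)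
    (hS : ∀ x ∈ S, 0 < x ∧ x ≤ L ∧ A.eval x = 0) (he : e ≤ S.card) :
    Inv L ((X - C L)^e * D * (A - X * C m * G)) ((X - C L)^e * D * G) := by
  obtain ⟨T, hT, hT'⟩ := count h hm hA hG S fun x hx => ⟨(hS x hx).1, (hS x hx).2.2⟩
  refine ⟨D, _, G, e, T, rfl, rfl, hD, Wr_sub_neg h hm, by simpa using hA, hG, ?_, he.trans hT⟩
  intro x hx
  obtain ⟨x1, x2, y, hy, hxy⟩ := hT' x hx
  exact ⟨x1, hxy.trans_le (hS y hy).2.1, x2⟩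

lemma Inv_step {L m k b : ℝ} (hL : 0 < L) (hm : 0 < m) (hk : 0 < k) (hb : 0 ≤ b) {f g : ℝ[X]}
    (hI : Inv L f g) :
    Inv L ((C k - X * C b) * f - X * C m * (f + (C k - X * C b) * g))
      (f + (C k - X * C b) * g) := by
  obtain ⟨D, F, G, e, T, rfl, rfl, hD, hW, hF, hG, hT, he⟩ := hI
  by_cases hc : ∃ x, k - x * b = 0 ∧ F.eval x = 0
  · obtain ⟨x0, hx, hFx⟩ := hc
    have hb0 : b ≠ 0 := by rintro rfl; simp at hx; exact hk.ne' hx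
    have hb1 : 0 < b := lt_of_le_of_ne hb hb0.symm
    have hp : (C k - X * C b) = C (-b) * (X - C x0) := by
      have : k = x0 * b := by linarith
      rw [this]; simp only [C_mul, C_neg]; ring
    obtain ⟨Q, hQ⟩ := dvd_iff_isRoot.2 hFx
    set F1 := C (-b⁻¹) * Q with hF1
    have hpF : F = (C k - X * C b) * F1 := by
      rw [hp, hF1, hQ]
      have : C (-b) * C (-b⁻¹) = (1 : ℝ[X]) := by
        rw [← C_mul]; simp [hb0]
      linear_combination (-(X - C x0) * Q) * this
    have hF10 : 0 < F1.eval 0 := by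
      have : F.eval 0 = k * F1.eval 0 := by rw [hpF]; simp
      rw [this] at hF
      exact (pos_iff_pos_of_mul_pos hF).1 hk
    have hW' : ∀ x, Wr F (F1 + G) x < 0 := by
      intro x
      have e1 : Wr F (F1 + G) x = - b * (F1.eval x)^2 + Wr F G x := by
        have : Wr F F1 x = - b * (F1.eval x)^2 := by
          rw [hpF]; simp [Wr]; ring
        simp only [Wr, eval_add, derivative_add] at this ⊢
        linarith
      rw [e1]
      have : 0 ≤ b * (F1.eval x)^2 := by positivity
      linarith [hW x]
    have hG' : 0 < (F1 + G).eval 0 := by simp; linarith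
    by_cases hx0 : x0 = L
    · subst hx0
      have hxT : x0 ∉ T := fun h => absurd (hT x0 h).2.1 (lt_irrefl _)
      have := Inv_mk (L := x0) (D := D * C (-b)) (e := e + 1) (S := insert x0 T) hm
        (by simp [hD, hb0]) hW' hF hG' ?_ ?_
      · convert this using 1
        · rw [pow_succ]
          have h2 := hp
          have h3 := hpF
          generalize C k - X * C b = p at *
          rw [h3, h2]; ring
        · rw [pow_succ]
          have h2 := hp
          have h3 := hpF
          generalize C k - X * C b = p at *
          rw [h3, h2]; ring
      · intro x hx
        rcases Finset.mem_insert.1 hx with rfl | hx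
        · exact ⟨hL, le_rfl, hFx⟩
        · exact ⟨(hT x hx).1, (hT x hx).2.1.le, (hT x hx).2.2⟩
      · rw [Finset.card_insert_of_notMem hxT]; omega
    · have := Inv_mk (L := L) (D := D * (C k - X * C b)) (e := e) (S := T) hm
        (by rw [hp]; simp [hD, hb0, sub_eq_zero]; exact fun h => hx0 h.symm) hW' hF hG' ?_ he
      · convert this using 1
        · have h3 := hpF
          generalize C k - X * C b = p at *
          rw [h3]; ring
        · have h3 := hpF
          generalize C k - X * C b = p at *
          rw [h3]; ring
      · exact fun x hx => ⟨(hT x hx).1, (hT x hx).2.1.le, (hT x hx).2.2⟩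
  · push Not at hc
    have hW' : ∀ x, Wr ((C k - X * C b) * F) (F + (C k - X * C b) * G) x < 0 := by
      intro x
      have e1 : Wr ((C k - X * C b) * F) (F + (C k - X * C b) * G) x =
          - b * (F.eval x)^2 + (k - x * b)^2 * Wr F G x := by
        simp [Wr]; ring
      rw [e1]
      have h1 : 0 ≤ b * (F.eval x)^2 := by positivity
      by_cases hp : k - x * b = 0
      · have hb0 : b ≠ 0 := by rintro rfl; simp at hp; exact hk.ne' hp
        have := hc x hp
        have : 0 < b * (F.eval x)^2 := lt_of_le_of_ne h1 (by positivity)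
        rw [hp]; linarith
      · have : (k - x * b)^2 * Wr F G x < 0 := mul_neg_of_pos_of_neg (by positivity) (hW x)
        linarith
    have := Inv_mk (L := L) (D := D) (e := e) (S := T) hm hD hW' (by simp; positivity)
      (by simp; positivity) ?_ he
    · convert this using 1 <;> ring
    · exact fun x hx => ⟨(hT x hx).1, (hT x hx).2.1.le, by simp [(hT x hx).2.2]⟩

lemma Inv_fg {L : ℝ} (hL : 0 < L) {m k b : ℕ → ℝ} {n : ℕ} (hm : ∀ j, 1 ≤ j → j ≤ n → 0 < m j)
    (hk : ∀ j, 1 ≤ j → j ≤ n → 0 < k j) (hb : ∀ j, 1 ≤ j → j ≤ n → 0 ≤ b j) :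
    ∀ j, j + 1 ≤ n → Inv L (fg m k b (j+1)).1 (fg m k b (j+1)).2 := by
  intro j
  induction j with
  | zero =>
    intro h
    have h1 := hm 1 le_rfl h
    have h2 := hk 1 le_rfl h
    have h3 := hb 1 le_rfl h
    refine ⟨1, (fg m k b 1).1, 1, 0, ∅, by simp, by simp [fg], by simp, ?_, ?_, by simp, by simp,
      by simp⟩
    · intro x
      simp [Wr, fg, pp]
      linarith
    · simp [fg, pp, h2]
  | succ j ih =>
    intro h
    have := Inv_step hL (hm (j+2) (by omega) h) (hk (j+2) (by omega) h) (hb (j+2) (by omega) h)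
      (ih (by omega))
    rw [fg]
    exact this

lemma fg_deg (m k b : ℕ → ℝ) (j : ℕ) :
    Small (fg m k b j).1 (j+1) ∧ Small (X * (fg m k b j).2) (j+1) := by
  have hp : ∀ (i r : ℕ) (F : ℝ[X]), Small F r → Small (pp k b i * F) (r+1) := by
    intro i r F hF
    have e : pp k b i * F = C (k i) * F - C (b i) * (X * F) := by rw [pp]; ring
    rw [e]
    exact (hF.mono (by omega)).C_mul _ |>.sub (hF.X_mul.C_mul _)
  induction j with
  | zero =>
    constructor
    · intro i hi
      simp [fg, coeff_one]; omega
    · intro i hi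
      simp [fg]
  | succ j ih =>
    obtain ⟨h1, h2⟩ := ih
    have h3 : Small (X * ((fg m k b j).1 + pp k b (j+1) * (fg m k b j).2)) (j+1+1) := by
      rw [mul_add]
      refine h1.X_mul.add ?_
      have := hp (j+1) _ _ h2
      rwa [mul_left_comm] at this
    refine ⟨?_, ?_⟩
    · rw [fg]
      have := (hp (j+1) _ _ h1).sub (h3.C_mul (m (j+1)))
      convert this using 1
      ring
    · rw [fg]; exact h3

lemma nec (n mm : ℕ) (hn : 1 ≤ n) (t : Fin mm → ℕ) (hsum : ∑ i, t i = n)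
    (lam : Fin mm → ℝ) (hpos : ∀ i, 0 < lam i) (hmono : StrictMono lam) (m k b : ℕ → ℝ)
    (hm : ∀ j, 1 ≤ j → j ≤ n → 0 < m j) (hk : ∀ j, 1 ≤ j → j ≤ n → 0 < k j)
    (hb : ∀ j, 1 ≤ j → j ≤ n → 0 ≤ b j)
    (hdvd : (∏ i, (Polynomial.X - Polynomial.C (lam i)) ^ t i) ∣ fpoly m k b n) (i : Fin mm) :
    t i ≤ (i : ℕ) + 1 := by
  rw [fpoly_eq] at hdvd
  have hI : Inv (lam i) (fg m k b n).1 (fg m k b n).2 := by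
    have := Inv_fg (hpos i) hm hk hb (n-1) (by omega)
    rwa [Nat.sub_add_cancel hn] at this
  obtain ⟨D, F, G, e, T, hf, -, hD, hW, hF, hG, hT, he⟩ := hI
  have hF0 : F ≠ 0 := by rintro rfl; simp at hF
  have hD0 : D ≠ 0 := by rintro rfl; simp at hD
  have hf0 : (fg m k b n).1 ≠ 0 := by
    rw [hf]
    exact mul_ne_zero (mul_ne_zero (pow_ne_zero _ (X_sub_C_ne_zero _)) hD0) hF0
  have hdeg : (fg m k b n).1.natDegree ≤ n := by
    rw [natDegree_le_iff_coeff_eq_zero]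
    exact fun i hi => (fg_deg m k b n).1 i hi
  -- multiplicity bound
  have h1 : t i ≤ e + 1 := by
    by_contra! hlt
    have d0 : (X - C (lam i)) ^ t i ∣ ∏ i, (X - C (lam i)) ^ t i :=
      Finset.dvd_prod_of_mem (fun i => (X - C (lam i)) ^ t i) (Finset.mem_univ i)
    have d1 : (X - C (lam i)) ^ (e + 2) ∣ (X - C (lam i))^e * (D * F) := by
      rw [← mul_assoc, ← hf]
      exact ((pow_dvd_pow _ (by omega)).trans d0).trans hdvd
    rw [pow_add] at d1
    have d2 := (mul_dvd_mul_iff_left (pow_ne_zero e (X_sub_C_ne_zero (lam i)))).1 d1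
    have cop : IsCoprime ((X - C (lam i))^2) D := by
      apply IsCoprime.pow_left
      rw [(irreducible_X_sub_C _).coprime_iff_not_dvd, dvd_iff_isRoot]
      exact hD
    obtain ⟨Q, hQ⟩ := cop.dvd_of_dvd_mul_left d2
    have := hW (lam i)
    rw [hQ] at this
    simp [Wr, derivative_pow] at this
  -- cofactor is constant
  obtain ⟨c, hc⟩ := hdvd
  have hP : (∏ i, (X - C (lam i)) ^ t i).natDegree = n := by
    rw [natDegree_prod _ _ fun i _ => pow_ne_zero _ (X_sub_C_ne_zero _)]
    simp [hsum]
  have hc0 : c ≠ 0 := by rintro rfl; simp at hc; exact hf0 hc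
  have hP0 : (∏ i, (X - C (lam i)) ^ t i) ≠ 0 :=
    Finset.prod_ne_zero_iff.2 fun i _ => pow_ne_zero _ (X_sub_C_ne_zero _)
  have hcd : c.natDegree = 0 := by
    rw [hc, natDegree_mul hP0 hc0, hP] at hdeg
    omega
  obtain ⟨c', rfl⟩ := natDegree_eq_zero.1 hcd
  have hc'0 : c' ≠ 0 := by rintro rfl; simp at hc0
  have hsub : T ⊆ (Finset.Iio i).image lam := by
    intro x hx
    obtain ⟨x1, x2, x3⟩ := hT x hx
    have : (fg m k b n).1.eval x = 0 := by rw [hf]; simp [x3]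
    rw [hc, eval_mul, eval_C, eval_prod] at this
    have := (mul_eq_zero.1 this).resolve_right hc'0
    obtain ⟨j, -, hj⟩ := Finset.prod_eq_zero_iff.1 this
    rw [eval_pow] at hj
    have hj := eq_zero_of_pow_eq_zero hj
    simp only [eval_sub, eval_X, eval_C, sub_eq_zero] at hj
    refine Finset.mem_image.2 ⟨j, Finset.mem_Iio.2 ?_, hj.symm⟩
    rw [hj] at x2
    exact hmono.lt_iff_lt.1 x2
  have := (Finset.card_le_card hsub).trans Finset.card_image_le
  rw [Fin.card_Iio] at this
  omega

end MSI

/-- Inverse eigenvalue problem for mass–spring–inerter systems (Theorem `sta3`):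
given `0 < λ_1 < ⋯ < λ_m` and multiplicities `t_i ≥ 1` with `∑ t_i = n`, there exist
`m_j > 0`, `k_j > 0`, `b_j ≥ 0` with `∏ (λ − λ_i)^{t_i} ∣ det(K − λ(M+B))`
iff `t_i ≤ i` for all `i`. -/
theorem stmt_0 (n mm : ℕ) (hn : 1 ≤ n) (hmm : 1 ≤ mm)
    (t : Fin mm → ℕ) (ht : ∀ i, 0 < t i) (hsum : ∑ i, t i = n)
    (lam : Fin mm → ℝ) (hpos : ∀ i, 0 < lam i) (hmono : StrictMono lam) :
    (∃ m k b : ℕ → ℝ,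
        (∀ j, 1 ≤ j → j ≤ n → 0 < m j) ∧
        (∀ j, 1 ≤ j → j ≤ n → 0 < k j) ∧
        (∀ j, 1 ≤ j → j ≤ n → 0 ≤ b j) ∧
        (∏ i, (Polynomial.X - Polynomial.C (lam i)) ^ t i) ∣ fpoly m k b n) ↔
      ∀ i : Fin mm, t i ≤ (i : ℕ) + 1 := by
  exact ⟨fun ⟨m, k, b, hm, hk, hb, hdvd⟩ =>
    MSI.nec n mm hn t hsum lam hpos hmono m k b hm hk hb hdvd,
    fun h => MSI.suff n mm t ht hsum lam hpos hmono h⟩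
end

section
/- Let 0 < λ_1 < λ_2 < λ_3 be real numbers and n = 5. If there exist real numbers m_j > 0, k_j > 0, b_j ≥ 0 (j = 1,…,5) such that (λ − λ_1)(λ − λ_2)(λ − λ_3)^3 divides det(K − λ(M+B)) in ℝ[λ], then max_{j∈{2,3,4}} m_j/m_{j+1} > (λ_1/(8λ_3))·(1 − (λ_2/λ_3)^{1/3}). -/
open Polynomial

lemma herm_diag (A : Matrix (Fin 5) (Fin 5) ℝ) (hA : A.IsHermitian) :
    ∃ W : Matrix (Fin 5) (Fin 5) ℝ, W.transpose * W = 1 ∧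
      W.transpose * A * W = Matrix.diagonal hA.eigenvalues := by
  refine ⟨(hA.eigenvectorUnitary : Matrix (Fin 5) (Fin 5) ℝ), ?_, ?_⟩
  · have := Unitary.coe_star_mul_self hA.eigenvectorUnitary
    simpa [Matrix.star_eq_conjTranspose, Matrix.conjTranspose_eq_transpose_of_trivial] using this
  · have := hA.conjStarAlgAut_star_eigenvectorUnitary
    rw [Unitary.conjStarAlgAut_star_apply] at this
    simpa [Matrix.star_eq_conjTranspose, Matrix.conjTranspose_eq_transpose_of_trivial] using this

lemma pencil_diag (P K : Matrix (Fin 5) (Fin 5) ℝ) (hP : P.PosDef) (hK : K.IsHermitian)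
    (L : Fin 5 → ℝ)
    (hd : (∏ i, (X - C (L i))) ∣ (K.map C - (X : ℝ[X]) • P.map C).det) :
    ∃ U : Matrix (Fin 5) (Fin 5) ℝ, U.transpose * P * U = 1 ∧
      U.transpose * K * U = Matrix.diagonal L := by
  obtain ⟨W, hW, hWP⟩ := herm_diag P hP.isHermitian
  set e := hP.isHermitian.eigenvalues with he
  have hpos : ∀ i, 0 < e i := fun i => hP.eigenvalues_pos i
  set R := W * Matrix.diagonal (fun i => (Real.sqrt (e i))⁻¹) with hR
  have hRP : R.transpose * P * R = 1 := by
    have : R.transpose * P * R = Matrix.diagonal (fun i => (Real.sqrt (e i))⁻¹) *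
        (W.transpose * P * W) * Matrix.diagonal (fun i => (Real.sqrt (e i))⁻¹) := by
      simp only [hR, Matrix.transpose_mul, Matrix.diagonal_transpose, Matrix.mul_assoc]
    rw [this, hWP, Matrix.diagonal_mul_diagonal, Matrix.diagonal_mul_diagonal,
      ← Matrix.diagonal_one]
    congr 1
    funext i
    have h1 := Real.mul_self_sqrt (hpos i).le
    have h2 := (Real.sqrt_pos.2 (hpos i)).ne'
    field_simp
    rw [sq, h1]
  set Cm := R.transpose * K * R with hCm
  have hCH : Cm.IsHermitian := by
    have := Matrix.isHermitian_conjTranspose_mul_mul R hK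
    rwa [Matrix.conjTranspose_eq_transpose_of_trivial] at this
  have hdet : Cm.charpoly = - (C (R.det * R.det) * (K.map C - (X : ℝ[X]) • P.map C).det) := by
    have h1 : Cm.charmatrix = -(R.transpose.map C * (K.map C - (X : ℝ[X]) • P.map C) * R.map C) := by
      rw [Matrix.mul_sub, Matrix.sub_mul, Matrix.mul_smul, Matrix.smul_mul, ← Matrix.map_mul,
        ← Matrix.map_mul, ← Matrix.map_mul, ← Matrix.map_mul, hRP, ← hCm, Matrix.charmatrix,
        neg_sub]
      congr 1
      ext i j : 2
      simp [Matrix.scalar_apply, Matrix.diagonal_apply, Matrix.one_apply]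
    rw [Matrix.charpoly, h1, Matrix.det_neg, Matrix.det_mul, Matrix.det_mul]
    have h2 : ∀ A : Matrix (Fin 5) (Fin 5) ℝ, (A.map C).det = C A.det := fun A => by
      rw [RingHom.map_det]; rfl
    rw [h2, h2, Matrix.det_transpose]
    simp only [Fintype.card_fin, map_mul]
    ring
  have hcp : Cm.charpoly = (Matrix.diagonal L).charpoly := by
    rw [Matrix.charpoly_diagonal]
    apply eq_of_monic_of_dvd_of_natDegree_le
    · exact monic_prod_of_monic _ _ fun i _ => monic_X_sub_C _
    · exact Matrix.charpoly_monic _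
    · rw [hdet]
      exact (dvd_mul_of_dvd_right hd _).neg_right
    · rw [Matrix.charpoly_natDegree_eq_dim, natDegree_finsetProd_X_sub_C_eq_card]
      simp
  have hDH : (Matrix.diagonal L).IsHermitian := Matrix.isHermitian_diagonal L
  have hee := (hCH.eigenvalues_eq_eigenvalues_iff hDH).2 hcp
  obtain ⟨W1, h1, h1'⟩ := herm_diag _ hCH
  obtain ⟨W2, h2, h2'⟩ := herm_diag _ hDH
  have h2c : W2 * W2.transpose = 1 := mul_eq_one_comm.1 h2
  refine ⟨R * W1 * W2.transpose, ?_, ?_⟩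
  · calc _ = W2 * (W1.transpose * (R.transpose * P * R) * W1) * W2.transpose := by
          simp only [Matrix.transpose_mul, Matrix.transpose_transpose, Matrix.mul_assoc]
      _ = _ := by rw [hRP, Matrix.mul_one, h1, Matrix.mul_one, h2c]
  · calc _ = W2 * (W1.transpose * Cm * W1) * W2.transpose := by
          simp only [hCm, Matrix.transpose_mul, Matrix.transpose_transpose, Matrix.mul_assoc]
      _ = (W2 * W2.transpose) * Matrix.diagonal L * (W2 * W2.transpose) := by
          rw [h1', hee, ← h2']
          simp only [Matrix.mul_assoc]
      _ = _ := by rw [h2c, Matrix.mul_one, Matrix.one_mul]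

/-- consequences of the diagonalization -/
lemma pencil_facts (P K : Matrix (Fin 5) (Fin 5) ℝ) (l1 l2 l3 : ℝ) (h12 : l1 < l2) (h23 : l2 < l3)
    (U : Matrix (Fin 5) (Fin 5) ℝ) (hP : U.transpose * P * U = 1)
    (hK : U.transpose * K * U = Matrix.diagonal ![l1, l2, l3, l3, l3]) :
    (∀ x : Fin 5 → ℝ, l1 * (x ⬝ᵥ P.mulVec x) ≤ x ⬝ᵥ K.mulVec x) ∧
    (∀ i j : Fin 5, ∃ x : Fin 5 → ℝ, x ≠ 0 ∧ x i = 0 ∧ x j = 0 ∧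
      K.mulVec x = l3 • P.mulVec x) ∧
    (∀ w : Fin 5 → ℝ, ∃ x : Fin 5 → ℝ, x ≠ 0 ∧ w ⬝ᵥ x = 0 ∧
      x ⬝ᵥ K.mulVec x ≤ l2 * (x ⬝ᵥ P.mulVec x)) := by
  have hUr : U * (U.transpose * P) = 1 := mul_eq_one_comm.1 hP
  have hUt : (P * U) * U.transpose = 1 := mul_eq_one_comm.1 (by rw [← Matrix.mul_assoc]; exact hP)
  have hinj : ∀ y, U.mulVec y = 0 → y = 0 := fun y hy => by
    have : (U.transpose * P * U).mulVec y = 0 := by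
      rw [← Matrix.mulVec_mulVec, hy, Matrix.mulVec_zero]
    rwa [hP, Matrix.one_mulVec] at this
  have q : ∀ (A : Matrix (Fin 5) (Fin 5) ℝ) y, (U.mulVec y) ⬝ᵥ A.mulVec (U.mulVec y) =
      y ⬝ᵥ (U.transpose * A * U).mulVec y := fun A y => by
    rw [← Matrix.mulVec_mulVec, ← Matrix.mulVec_mulVec, Matrix.dotProduct_mulVec y,
      Matrix.vecMul_transpose]
  have qP : ∀ y, (U.mulVec y) ⬝ᵥ P.mulVec (U.mulVec y) =
      y 0 ^ 2 + y 1 ^ 2 + y 2 ^ 2 + y 3 ^ 2 + y 4 ^ 2 := fun y => by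
    rw [q, hP, Matrix.one_mulVec]
    simp [dotProduct, Fin.sum_univ_five]; ring
  have qK : ∀ y, (U.mulVec y) ⬝ᵥ K.mulVec (U.mulVec y) =
      l1 * y 0 ^ 2 + l2 * y 1 ^ 2 + l3 * y 2 ^ 2 + l3 * y 3 ^ 2 + l3 * y 4 ^ 2 := fun y => by
    rw [q, hK]
    simp [dotProduct, Fin.sum_univ_five, Matrix.mulVec_diagonal]; ring
  refine ⟨?_, ?_, ?_⟩
  · intro x
    have hx : x = U.mulVec ((U.transpose * P).mulVec x) := by
      rw [Matrix.mulVec_mulVec, hUr, Matrix.one_mulVec]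
    rw [hx, qP, qK]
    set y := (U.transpose * P).mulVec x
    nlinarith [mul_nonneg (sub_nonneg.2 h12.le) (sq_nonneg (y 1)),
      mul_nonneg (sub_nonneg.2 (h12.trans h23).le) (sq_nonneg (y 2)),
      mul_nonneg (sub_nonneg.2 (h12.trans h23).le) (sq_nonneg (y 3)),
      mul_nonneg (sub_nonneg.2 (h12.trans h23).le) (sq_nonneg (y 4))]
  · intro i j
    let A : Matrix (Fin 2) (Fin 3) ℝ := !![U i 2, U i 3, U i 4; U j 2, U j 3, U j 4]
    have hker : LinearMap.ker (Matrix.mulVecLin A) ≠ ⊥ :=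
      LinearMap.ker_ne_bot_of_finrank_lt (by simp)
    obtain ⟨z, hz, hz0⟩ := (Submodule.ne_bot_iff _).1 hker
    have hz' : A.mulVec z = 0 := hz
    have e1 : U i 2 * z 0 + U i 3 * z 1 + U i 4 * z 2 = 0 := by
      have := congrFun hz' 0
      simpa [A, Matrix.mulVec, dotProduct, Fin.sum_univ_three] using this
    have e2 : U j 2 * z 0 + U j 3 * z 1 + U j 4 * z 2 = 0 := by
      have := congrFun hz' 1
      simpa [A, Matrix.mulVec, dotProduct, Fin.sum_univ_three] using this
    refine ⟨U.mulVec ![0, 0, z 0, z 1, z 2], ?_, ?_, ?_, ?_⟩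
    · intro h
      apply hz0
      have h := hinj _ h
      funext t
      fin_cases t
      · exact congrFun h 2
      · exact congrFun h 3
      · exact congrFun h 4
    · simpa [Matrix.mulVec, dotProduct, Fin.sum_univ_five] using e1
    · simpa [Matrix.mulVec, dotProduct, Fin.sum_univ_five] using e2
    · have hd : (U.transpose * K * U).mulVec ![0, 0, z 0, z 1, z 2] =
          l3 • (U.transpose * P * U).mulVec ![0, 0, z 0, z 1, z 2] := by
        rw [hP, hK, Matrix.one_mulVec]
        funext t
        fin_cases t <;> simp [Matrix.mulVec_diagonal]
      have := congrArg (P * U).mulVec hd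
      rw [Matrix.mulVec_smul] at this
      simp only [Matrix.mulVec_mulVec, ← Matrix.mul_assoc, hUt, Matrix.one_mul] at this
      simpa [Matrix.mulVec_mulVec] using this
  · intro w
    obtain ⟨a, b, hab, hw⟩ : ∃ a b : ℝ, (a ≠ 0 ∨ b ≠ 0) ∧
        (Matrix.vecMul w U 0) * a + (Matrix.vecMul w U 1) * b = 0 := by
      by_cases h : Matrix.vecMul w U 0 = 0
      · exact ⟨1, 0, by simp, by simp [h]⟩
      · exact ⟨-Matrix.vecMul w U 1, Matrix.vecMul w U 0, Or.inr h, by ring⟩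
    refine ⟨U.mulVec ![a, b, 0, 0, 0], ?_, ?_, ?_⟩
    · intro h
      have h := hinj _ h
      rcases hab with h' | h'
      · exact h' (congrFun h 0)
      · exact h' (congrFun h 1)
    · rw [Matrix.dotProduct_mulVec]
      simpa [dotProduct, Fin.sum_univ_five] using hw
    · rw [qP, qK]
      simp
      nlinarith [mul_nonneg (sub_nonneg.2 h12.le) (sq_nonneg a)]

def rows5 (l m1 m2 m3 m4 m5 c1 c2 c3 c4 c5 x1 x2 x3 x4 x5 : ℝ) : Prop :=
  c1 * x1 - c2 * (x2 - x1) = l * m1 * x1 ∧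
  c2 * (x2 - x1) - c3 * (x3 - x2) = l * m2 * x2 ∧
  c3 * (x3 - x2) - c4 * (x4 - x3) = l * m3 * x3 ∧
  c4 * (x4 - x3) - c5 * (x5 - x4) = l * m4 * x4 ∧
  c5 * (x5 - x4) = l * m5 * x5

lemma structure_lemma (l m1 m2 m3 m4 m5 c1 c2 c3 c4 c5 : ℝ) (hl : 0 < l) (h1 : 0 < m1)
    (h2 : 0 < m2) (h3 : 0 < m3) (h4 : 0 < m4) (h5 : 0 < m5)
    (H : ∀ i j : Fin 5, ∃ x : Fin 5 → ℝ, x ≠ 0 ∧ x i = 0 ∧ x j = 0 ∧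
      rows5 l m1 m2 m3 m4 m5 c1 c2 c3 c4 c5 (x 0) (x 1) (x 2) (x 3) (x 4)) :
    c1 = l * m1 ∧ c2 = 0 ∧ c3 * (m2 + m3) = l * (m2 * m3) ∧ c4 = 0 ∧
      c5 * (m4 + m5) = l * (m4 * m5) := by
  have g1 := (mul_pos hl h1).ne'
  have g2 := (mul_pos hl h2).ne'
  have g3 := (mul_pos hl h3).ne'
  have g4 := (mul_pos hl h4).ne'
  have g5 := (mul_pos hl h5).ne'
  have ext0 : ∀ x : Fin 5 → ℝ, x 0 = 0 → x 1 = 0 → x 2 = 0 → x 3 = 0 → x 4 = 0 → x = 0 := by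
    intro x a b c d e
    funext i
    fin_cases i <;> assumption
  have hc2 : c2 = 0 := by
    by_contra hc
    by_cases h5c : c5 = 0
    · obtain ⟨x, hx, e1, e2, r1, r2, r3, r4, r5⟩ := H 0 3
      subst h5c
      have x1 : x 1 = 0 := by simpa [e1, hc] using r1
      have x4 : x 4 = 0 := by
        have : l * m5 * x 4 = 0 := by linarith
        exact (mul_eq_zero.1 this).resolve_left g5
      have x2 : x 2 = 0 := by
        have : l * m3 * x 2 = 0 := by
          rw [e1, x1] at r2
          rw [e2] at r4 r3
          rw [x1] at r3
          linarith
        exact (mul_eq_zero.1 this).resolve_left g3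
      exact hx (ext0 x e1 x1 x2 e2 x4)
    · obtain ⟨x, hx, e1, e2, r1, r2, r3, r4, r5⟩ := H 0 4
      have x1 : x 1 = 0 := by simpa [e1, hc] using r1
      have x3 : x 3 = 0 := by simpa [e2, h5c] using r5
      have x2 : x 2 = 0 := by
        have : l * m3 * x 2 = 0 := by
          rw [e1, x1] at r2
          rw [e2, x3] at r4
          rw [x1, x3] at r3
          linarith
        exact (mul_eq_zero.1 this).resolve_left g3
      exact hx (ext0 x e1 x1 x2 x3 e2)
  subst hc2
  have hc4 : c4 = 0 := by
    by_contra hc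
    obtain ⟨x, hx, e1, x3, x4, r1, r2, r3, r4, r5⟩ : ∃ x : Fin 5 → ℝ, x ≠ 0 ∧ x 0 = 0 ∧
        x 3 = 0 ∧ x 4 = 0 ∧
        rows5 l m1 m2 m3 m4 m5 c1 0 c3 c4 c5 (x 0) (x 1) (x 2) (x 3) (x 4) := by
      by_cases h5c : c5 = 0
      · obtain ⟨x, hx, e1, e2, r⟩ := H 0 3
        refine ⟨x, hx, e1, e2, ?_, r⟩
        have r5 := r.2.2.2.2
        simpa [h5c, hl.ne', h5.ne'] using r5
      · obtain ⟨x, hx, e1, e2, r⟩ := H 0 4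
        refine ⟨x, hx, e1, ?_, e2, r⟩
        have r5 := r.2.2.2.2
        simpa [e2, h5c] using r5
    have x2 : x 2 = 0 := by simpa [x3, x4, hc] using r4
    have x1 : x 1 = 0 := by
      have : l * m2 * x 1 = 0 := by
        rw [x2, x3] at r3
        rw [x2] at r2
        linarith
      exact (mul_eq_zero.1 this).resolve_left g2
    exact hx (ext0 x e1 x1 x2 x3 x4)
  subst hc4
  refine ⟨?_, rfl, ?_, rfl, ?_⟩
  · obtain ⟨x, hx, e1, e2, r1, r2, r3, r4, r5⟩ := H 1 4
    have x2 : x 2 = 0 := by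
      have : l * m3 * x 2 = 0 := by rw [e1] at r2 r3; linarith
      exact (mul_eq_zero.1 this).resolve_left g3
    have x3 : x 3 = 0 := by
      have : l * m4 * x 3 = 0 := by rw [e2] at r5 r4; linarith
      exact (mul_eq_zero.1 this).resolve_left g4
    have x0 : x 0 ≠ 0 := fun h => hx (ext0 x h e1 x2 x3 e2)
    apply mul_right_cancel₀ x0
    linarith
  · obtain ⟨x, hx, e1, e2, r1, r2, r3, r4, r5⟩ := H 0 4
    have x3 : x 3 = 0 := by
      have : l * m4 * x 3 = 0 := by rw [e2] at r5 r4; linarith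
      exact (mul_eq_zero.1 this).resolve_left g4
    have hs : m2 * x 1 + m3 * x 2 = 0 := by
      have : l * (m2 * x 1 + m3 * x 2) = 0 := by linarith
      exact (mul_eq_zero.1 this).resolve_left hl.ne'
    have x2 : x 2 ≠ 0 := fun h => by
      rw [h] at hs
      have : x 1 = 0 := by simpa [h2.ne'] using hs
      exact hx (ext0 x e1 this h x3 e2)
    apply mul_right_cancel₀ x2
    linear_combination m2 * r3 + c3 * hs
  · obtain ⟨x, hx, e1, e2, r1, r2, r3, r4, r5⟩ := H 0 1
    have x2 : x 2 = 0 := by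
      have : l * m3 * x 2 = 0 := by rw [e2] at r2 r3; linarith
      exact (mul_eq_zero.1 this).resolve_left g3
    have hs : m4 * x 3 + m5 * x 4 = 0 := by
      have : l * (m4 * x 3 + m5 * x 4) = 0 := by linarith
      exact (mul_eq_zero.1 this).resolve_left hl.ne'
    have x4 : x 4 ≠ 0 := fun h => by
      rw [h] at hs
      have : x 3 = 0 := by simpa [h4.ne'] using hs
      exact hx (ext0 x e1 e2 x2 this h)
    apply mul_right_cancel₀ x4
    linear_combination m4 * r5 + c5 * hs

lemma tri_mulVec (k : ℕ → ℝ) (x : Fin 5 → ℝ) : (triMat k 5).mulVec x =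
    ![k 1 * x 0 - k 2 * (x 1 - x 0), k 2 * (x 1 - x 0) - k 3 * (x 2 - x 1),
      k 3 * (x 2 - x 1) - k 4 * (x 3 - x 2), k 4 * (x 3 - x 2) - k 5 * (x 4 - x 3),
      k 5 * (x 4 - x 3)] := by
  funext i
  fin_cases i <;> simp [triMat, Matrix.mulVec, dotProduct, Fin.sum_univ_five] <;> ring

lemma tri_quad (k : ℕ → ℝ) (x : Fin 5 → ℝ) : x ⬝ᵥ (triMat k 5).mulVec x =
    k 1 * x 0 ^ 2 + k 2 * (x 1 - x 0) ^ 2 + k 3 * (x 2 - x 1) ^ 2 + k 4 * (x 3 - x 2) ^ 2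
      + k 5 * (x 4 - x 3) ^ 2 := by
  rw [tri_mulVec]
  simp [dotProduct, Fin.sum_univ_five]; ring

lemma diag_quad (m : ℕ → ℝ) (x : Fin 5 → ℝ) :
    x ⬝ᵥ (Matrix.diagonal (fun i : Fin 5 => m ((i : ℕ) + 1))).mulVec x =
    m 1 * x 0 ^ 2 + m 2 * x 1 ^ 2 + m 3 * x 2 ^ 2 + m 4 * x 3 ^ 2 + m 5 * x 4 ^ 2 := by
  simp [dotProduct, Fin.sum_univ_five, Matrix.mulVec_diagonal]; ring

lemma tri_herm (k : ℕ → ℝ) : (triMat k 5).IsHermitian := by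
  ext i j
  fin_cases i <;> fin_cases j <;> simp [triMat, Matrix.conjTranspose]

lemma final_ineq (l1 l2 l3 k1 k2 k3 m2 m3 m4 e y1 y2 y3 Q : ℝ) (h1 : 0 < l1)
    (h3 : 0 < l3) (h23 : l2 < l3) (hm2 : 0 < m2) (hm3 : 0 < m3) (hm4 : 0 < m4)
    (hk1 : l1 * m4 ≤ k1) (hk2 : l1 * m4 ≤ k2) (hk3 : l1 * m4 ≤ k3)
    (e23 : m2 ≤ e * m3) (e34 : m3 ≤ e * m4) (he : e ≤ 1) (hQ : 0 < Q)
    (hKQ : k1 * y1 ^ 2 + k2 * (y2 - y1) ^ 2 + k3 * (y3 - y2) ^ 2 ≤ Q)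
    (hle : (l3 - l2) * Q ≤ l3 ^ 2 * (m2 * y2 ^ 2 + m3 * y3 ^ 2)) :
    l1 * (l3 - l2) < 8 * e * l3 ^ 2 := by
  have he0 : 0 < e := by
    by_contra h
    push Not at h
    nlinarith
  set S := y1 ^ 2 + (y2 - y1) ^ 2 + (y3 - y2) ^ 2 with hS
  have hS0 : 0 ≤ S := by positivity
  have a1 : l1 * m4 * S ≤ Q := by
    have := mul_le_mul_of_nonneg_right hk1 (sq_nonneg y1)
    have := mul_le_mul_of_nonneg_right hk2 (sq_nonneg (y2 - y1))
    have := mul_le_mul_of_nonneg_right hk3 (sq_nonneg (y3 - y2))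
    rw [hS]; linarith
  have a2 : y2 ^ 2 ≤ 2 * S := by
    rw [hS]; nlinarith [sq_nonneg (y1 - (y2 - y1)), sq_nonneg (y3 - y2)]
  have a3 : y3 ^ 2 ≤ 3 * S := by
    rw [hS]
    nlinarith [sq_nonneg (y1 - (y2 - y1)), sq_nonneg (y1 - (y3 - y2)),
      sq_nonneg ((y2 - y1) - (y3 - y2))]
  have b1 : m2 ≤ m3 := by nlinarith
  have b2 : m2 * y2 ^ 2 + m3 * y3 ^ 2 ≤ 5 * (e * m4) * S := by
    have c1 := mul_le_mul_of_nonneg_left a2 hm2.le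
    have c2 := mul_le_mul_of_nonneg_left a3 hm3.le
    have c3 : (2 * m2 + 3 * m3) * S ≤ 5 * (e * m4) * S :=
      mul_le_mul_of_nonneg_right (by linarith) hS0
    linarith
  have b3 : l1 * (m2 * y2 ^ 2 + m3 * y3 ^ 2) ≤ 5 * e * Q := by
    have := mul_le_mul_of_nonneg_left b2 h1.le
    have := mul_le_mul_of_nonneg_left a1 (by positivity : 0 ≤ 5 * e)
    linarith
  have b4 : l1 * (l3 - l2) * Q ≤ 5 * e * l3 ^ 2 * Q := by
    have := mul_le_mul_of_nonneg_left b3 (sq_nonneg l3)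
    have := mul_le_mul_of_nonneg_left hle h1.le
    linarith
  have b5 := le_of_mul_le_mul_right b4 hQ
  have : 0 < e * l3 ^ 2 := by positivity
  linarith

set_option maxHeartbeats 2000000 in
/-- Example `thm3`: for `n = 5`, `t = (1,1,3)` and `0 < λ_1 < λ_2 < λ_3`, any realization
forces `max_{j∈{2,3,4}} m_j/m_{j+1} > (λ_1/(8λ_3))(1 − (λ_2/λ_3)^{1/3})`. -/
theorem stmt_1 (lam₁ lam₂ lam₃ : ℝ) (h1 : 0 < lam₁) (h12 : lam₁ < lam₂) (h23 : lam₂ < lam₃)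
    (m k b : ℕ → ℝ)
    (hm : ∀ j, 1 ≤ j → j ≤ 5 → 0 < m j)
    (hk : ∀ j, 1 ≤ j → j ≤ 5 → 0 < k j)
    (hb : ∀ j, 1 ≤ j → j ≤ 5 → 0 ≤ b j)
    (hdvd : (Polynomial.X - Polynomial.C lam₁) * (Polynomial.X - Polynomial.C lam₂) *
        (Polynomial.X - Polynomial.C lam₃) ^ 3 ∣ fpoly m k b 5) :
    max (m 2 / m 3) (max (m 3 / m 4) (m 4 / m 5)) >
      lam₁ / (8 * lam₃) * (1 - (lam₂ / lam₃) ^ ((1 : ℝ) / 3)) := by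
  have m1 := hm 1 (by norm_num) (by norm_num)
  have m2 := hm 2 (by norm_num) (by norm_num)
  have m3 := hm 3 (by norm_num) (by norm_num)
  have m4 := hm 4 (by norm_num) (by norm_num)
  have m5 := hm 5 (by norm_num) (by norm_num)
  have k1 := hk 1 (by norm_num) (by norm_num)
  have k2 := hk 2 (by norm_num) (by norm_num)
  have k3 := hk 3 (by norm_num) (by norm_num)
  have k4 := hk 4 (by norm_num) (by norm_num)
  have k5 := hk 5 (by norm_num) (by norm_num)
  have b1 := hb 1 (by norm_num) (by norm_num)
  have b2 := hb 2 (by norm_num) (by norm_num)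
  have b3 := hb 3 (by norm_num) (by norm_num)
  have b4 := hb 4 (by norm_num) (by norm_num)
  have b5 := hb 5 (by norm_num) (by norm_num)
  have l3 : 0 < lam₃ := h1.trans (h12.trans h23)
  set P := Matrix.diagonal (fun i : Fin 5 => m ((i : ℕ) + 1)) + triMat b 5 with hPdef
  have qP : ∀ x : Fin 5 → ℝ, x ⬝ᵥ P.mulVec x =
      m 1 * x 0 ^ 2 + m 2 * x 1 ^ 2 + m 3 * x 2 ^ 2 + m 4 * x 3 ^ 2 + m 5 * x 4 ^ 2 +
      (b 1 * x 0 ^ 2 + b 2 * (x 1 - x 0) ^ 2 + b 3 * (x 2 - x 1) ^ 2 + b 4 * (x 3 - x 2) ^ 2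
      + b 5 * (x 4 - x 3) ^ 2) := fun x => by
    rw [hPdef, Matrix.add_mulVec, dotProduct_add, diag_quad, tri_quad]
  have qpos : ∀ x : Fin 5 → ℝ, x ≠ 0 → 0 < x ⬝ᵥ P.mulVec x := by
    intro x hx
    rw [qP]
    by_contra hle
    apply hx
    push Not at hle
    have p1 := mul_nonneg m1.le (sq_nonneg (x 0))
    have p2 := mul_nonneg m2.le (sq_nonneg (x 1))
    have p3 := mul_nonneg m3.le (sq_nonneg (x 2))
    have p4 := mul_nonneg m4.le (sq_nonneg (x 3))
    have p5 := mul_nonneg m5.le (sq_nonneg (x 4))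
    have p6 : 0 ≤ b 1 * x 0 ^ 2 + b 2 * (x 1 - x 0) ^ 2 + b 3 * (x 2 - x 1) ^ 2
      + b 4 * (x 3 - x 2) ^ 2 + b 5 * (x 4 - x 3) ^ 2 := by positivity
    have z : ∀ a t : ℝ, 0 < a → a * t ^ 2 ≤ 0 → t = 0 := fun a t ha h => by
      have : t ^ 2 ≤ 0 := nonpos_of_mul_nonpos_right h ha
      exact pow_eq_zero_iff (two_ne_zero) |>.1 (le_antisymm this (sq_nonneg t))
    funext i
    fin_cases i
    · exact z (m 1) (x 0) m1 (by linarith)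
    · exact z (m 2) (x 1) m2 (by linarith)
    · exact z (m 3) (x 2) m3 (by linarith)
    · exact z (m 4) (x 3) m4 (by linarith)
    · exact z (m 5) (x 4) m5 (by linarith)
  have hPpd : P.PosDef := by
    apply Matrix.PosDef.of_dotProduct_mulVec_pos
    · exact (Matrix.isHermitian_diagonal _).add (tri_herm b)
    · intro x hx
      simpa using qpos x hx
  have hd : (∏ i, (X - C (![lam₁, lam₂, lam₃, lam₃, lam₃] i))) ∣
      ((triMat k 5).map C - (X : ℝ[X]) • P.map C).det := by
    have : (∏ i, (X - C (![lam₁, lam₂, lam₃, lam₃, lam₃] i))) =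
        (X - C lam₁) * (X - C lam₂) * (X - C lam₃) ^ 3 := by
      simp [Fin.prod_univ_five]; ring
    rw [this]
    exact hdvd
  obtain ⟨U, hU1, hU2⟩ := pencil_diag P (triMat k 5) hPpd (tri_herm k) _ hd
  obtain ⟨F1, F2, F3⟩ := pencil_facts P (triMat k 5) lam₁ lam₂ lam₃ h12 h23 U hU1 hU2
  obtain ⟨s1, s2, s3, s4, s5⟩ := structure_lemma lam₃ (m 1) (m 2) (m 3) (m 4) (m 5)
    (k 1 - lam₃ * b 1) (k 2 - lam₃ * b 2) (k 3 - lam₃ * b 3) (k 4 - lam₃ * b 4)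
    (k 5 - lam₃ * b 5) l3 m1 m2 m3 m4 m5 (by
      intro i j
      obtain ⟨x, hx, hi, hj, hT⟩ := F2 i j
      refine ⟨x, hx, hi, hj, ?_⟩
      rw [hPdef, Matrix.add_mulVec, tri_mulVec, tri_mulVec] at hT
      have t0 := congrFun hT 0
      have t1 := congrFun hT 1
      have t2 := congrFun hT 2
      have t3 := congrFun hT 3
      have t4 := congrFun hT 4
      rw [Pi.smul_apply, Pi.add_apply, Matrix.mulVec_diagonal] at t0 t1 t2 t3 t4
      simp at t0 t1 t2 t3 t4
      refine ⟨?_, ?_, ?_, ?_, ?_⟩ <;> linarith)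
  -- lower bounds on stiffnesses
  have B1 : lam₁ * m 4 ≤ k 1 := by
    have := F1 ![1, 1, 1, 1, 1]
    rw [qP, tri_quad] at this
    simp at this
    nlinarith
  have B2 : lam₁ * m 4 ≤ k 2 := by
    have := F1 ![0, 1, 1, 1, 1]
    rw [qP, tri_quad] at this
    simp at this
    nlinarith
  have B3 : lam₁ * m 4 ≤ k 3 := by
    have := F1 ![0, 0, 1, 1, 1]
    rw [qP, tri_quad] at this
    simp at this
    nlinarith
  obtain ⟨x, hx, hw, hx2⟩ := F3 ![0, 0, 0, m 4, m 5]
  have hxP := qpos x hx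
  have hw' : m 4 * x 3 + m 5 * x 4 = 0 := by
    simpa [dotProduct, Fin.sum_univ_five] using hw
  have id2 : lam₃ * (m 4 * x 3 ^ 2 + m 5 * x 4 ^ 2) -
      (k 5 - lam₃ * b 5) * (x 4 - x 3) ^ 2 = 0 := by
    apply (mul_eq_zero.1 _).resolve_left (add_pos m4 m5).ne'
    linear_combination (-(x 4 - x 3) ^ 2) * s5 + lam₃ * (m 4 * x 3 + m 5 * x 4) * hw'
  have id1 : lam₃ * (m 2 * x 1 ^ 2 + m 3 * x 2 ^ 2) -
      (k 3 - lam₃ * b 3) * (x 2 - x 1) ^ 2 ≤ lam₃ * (m 2 * x 1 ^ 2 + m 3 * x 2 ^ 2) := by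
    have : 0 ≤ k 3 - lam₃ * b 3 := by
      apply nonneg_of_mul_nonneg_left _ (add_pos m2 m3)
      rw [s3]; positivity
    have := mul_nonneg this (sq_nonneg (x 2 - x 1))
    linarith
  have id3 : 0 ≤ lam₃ * (m 2 * x 1 ^ 2 + m 3 * x 2 ^ 2) -
      (k 3 - lam₃ * b 3) * (x 2 - x 1) ^ 2 := by
    apply nonneg_of_mul_nonneg_right _ (add_pos m2 m3)
    have : (m 2 + m 3) * (lam₃ * (m 2 * x 1 ^ 2 + m 3 * x 2 ^ 2) -
      (k 3 - lam₃ * b 3) * (x 2 - x 1) ^ 2) = lam₃ * (m 2 * x 1 + m 3 * x 2) ^ 2 := by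
      linear_combination (-(x 2 - x 1) ^ 2) * s3
    rw [this]; positivity
  have diff : lam₃ * (x ⬝ᵥ P.mulVec x) - x ⬝ᵥ (triMat k 5).mulVec x =
      lam₃ * (m 2 * x 1 ^ 2 + m 3 * x 2 ^ 2) - (k 3 - lam₃ * b 3) * (x 2 - x 1) ^ 2 := by
    rw [qP, tri_quad]
    linear_combination id2 - x 0 ^ 2 * s1 - (x 1 - x 0) ^ 2 * s2 - (x 3 - x 2) ^ 2 * s4
  have hQK : x ⬝ᵥ (triMat k 5).mulVec x ≤ lam₃ * (x ⬝ᵥ P.mulVec x) := by linarith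
  set Q := lam₃ * (x ⬝ᵥ P.mulVec x) with hQ
  have hQpos : 0 < Q := mul_pos l3 hxP
  have hKQ : k 1 * x 0 ^ 2 + k 2 * (x 1 - x 0) ^ 2 + k 3 * (x 2 - x 1) ^ 2 ≤ Q := by
    rw [tri_quad] at hQK
    have := mul_nonneg k4.le (sq_nonneg (x 3 - x 2))
    have := mul_nonneg k5.le (sq_nonneg (x 4 - x 3))
    linarith
  have hle : (lam₃ - lam₂) * Q ≤ lam₃ ^ 2 * (m 2 * x 1 ^ 2 + m 3 * x 2 ^ 2) := by
    have : (lam₃ - lam₂) * (x ⬝ᵥ P.mulVec x) ≤ lam₃ * (m 2 * x 1 ^ 2 + m 3 * x 2 ^ 2) := by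
      linarith
    have := mul_le_mul_of_nonneg_left this l3.le
    rw [hQ]; linarith
  set e := max (m 2 / m 3) (max (m 3 / m 4) (m 4 / m 5)) with he
  have e23 : m 2 ≤ e * m 3 := (div_le_iff₀ m3).1 (le_max_left _ _)
  have e34 : m 3 ≤ e * m 4 := (div_le_iff₀ m4).1 ((le_max_left _ _).trans (le_max_right _ _))
  have l2 : 0 < lam₂ := h1.trans h12
  have r0 : 0 < lam₂ / lam₃ := div_pos l2 l3
  have r1 : lam₂ / lam₃ < 1 := (div_lt_one l3).2 h23
  have rr : lam₂ / lam₃ ≤ (lam₂ / lam₃) ^ ((1 : ℝ) / 3) := by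
    have := Real.rpow_le_rpow_of_exponent_ge r0 r1.le (by norm_num : (1 : ℝ) / 3 ≤ 1)
    rwa [Real.rpow_one] at this
  have key : lam₁ / (8 * lam₃) * (1 - lam₂ / lam₃) = lam₁ * (lam₃ - lam₂) / (8 * lam₃ ^ 2) := by
    field_simp
  have step : lam₁ / (8 * lam₃) * (1 - (lam₂ / lam₃) ^ ((1 : ℝ) / 3)) ≤
      lam₁ * (lam₃ - lam₂) / (8 * lam₃ ^ 2) := by
    rw [← key]
    exact mul_le_mul_of_nonneg_left (by linarith) (by positivity)
  refine lt_of_le_of_lt step ?_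
  rw [div_lt_iff₀ (by positivity)]
  by_cases he1 : e ≤ 1
  · have := final_ineq lam₁ lam₂ lam₃ (k 1) (k 2) (k 3) (m 2) (m 3) (m 4) e (x 0) (x 1) (x 2) Q
      h1 l3 h23 m2 m3 m4 B1 B2 B3 e23 e34 he1 hQpos hKQ hle
    linarith
  · push Not at he1
    have : lam₁ * (lam₃ - lam₂) < lam₃ * lam₃ := by
      apply mul_lt_mul'' <;> linarith
    have : lam₃ ^ 2 < e * lam₃ ^ 2 := by nlinarith [pow_pos l3 2]
    nlinarith
end

section
/- Assume m_j > 0, k_j > 0, b_j ≥ 0 for all j = 1,…,n. Fix j ∈ [1, n−1] and suppose (−λ)·g_j(λ)/(f_j, g_j) ≪ f_j(λ)/(f_j, g_j). Then (−λ)·g_{j+1}(λ)/(f_{j+1}, g_{j+1}) ≪ f_{j+1}(λ)/(f_{j+1}, g_{j+1}). -/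
open Polynomial

/-- `Prec g f` formalizes `g ≪ f`: both polynomials have degree `s ≥ 1`, each has `s`
distinct real roots, the leading coefficients `c`, `d` have the same sign, and the roots
strictly interlace as `β 0 < α 0 < β 1 < α 1 < ⋯ < β (s-1) < α (s-1)`. -/
def Prec (g f : Polynomial ℝ) : Prop :=
  ∃ (s : ℕ) (c d : ℝ) (α β : Fin s → ℝ),
    0 < s ∧ 0 < c * d ∧ StrictMono α ∧ StrictMono β ∧
    f = Polynomial.C c * ∏ i, (Polynomial.X - Polynomial.C (α i)) ∧
    g = Polynomial.C d * ∏ i, (Polynomial.X - Polynomial.C (β i)) ∧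
    (∀ i, β i < α i) ∧
    ∀ (i : Fin s) (h : (i : ℕ) + 1 < s), α i < β ⟨(i : ℕ) + 1, h⟩

section rec_part

/-- entries as functions on naturals -/
noncomputable def LL {R : Type*} [CommRing R] (A : ℕ → ℕ → R) (n : ℕ) : R :=
  (Matrix.of fun r c : Fin n => A r c).det

lemma LL_rec {R : Type*} [CommRing R] (A : ℕ → ℕ → R) (n : ℕ)
    (h1 : ∀ c, c < n → A (n+1) c = 0) (h2 : ∀ r, r < n → A r (n+1) = 0) :
    LL A (n+2) = A (n+1) (n+1) * LL A (n+1) - A (n+1) n * A n (n+1) * LL A n := by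
  unfold LL
  rw [Matrix.det_succ_row _ (Fin.last (n+1)), Fin.sum_univ_castSucc, Fin.sum_univ_castSucc]
  rw [Finset.sum_eq_zero]
  · have e1 : ((Matrix.of fun r c : Fin (n+2) => A r c).submatrix (Fin.last (n+1)).succAbove
        (Fin.last (n+1)).succAbove) = (Matrix.of fun r c : Fin (n+1) => A r c) := by
      ext r c; simp
    have e2 : ((Matrix.of fun r c : Fin (n+2) => A r c).submatrix (Fin.last (n+1)).succAbove
        (Fin.last n).castSucc.succAbove).det = A n (n+1) * (Matrix.of fun r c : Fin n => A r c).det := by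
      rw [Matrix.det_succ_column _ (Fin.last n), Fin.sum_univ_castSucc, Finset.sum_eq_zero]
      · have e3 : (((Matrix.of fun r c : Fin (n+2) => A r c).submatrix (Fin.last (n+1)).succAbove
          (Fin.last n).castSucc.succAbove).submatrix (Fin.last n).succAbove
           (Fin.last n).succAbove) = (Matrix.of fun r c : Fin n => A r c) := by
          ext r c
          simp [Fin.succAbove, Fin.lt_def]
        rw [e3]
        simp [Fin.succAbove, ← two_mul]
      · intro r _
        simp [Fin.succAbove, h2 r r.2]
    rw [e1, e2]
    simp [← two_mul]
    ring_nf
  · intro c _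
    simp [h1 c c.2]

noncomputable def pp (k b : ℕ → ℝ) (i : ℕ) : ℝ[X] := C (k i) - X * C (b i)

noncomputable def EE (m k b : ℕ → ℝ) (r c : ℕ) : ℝ[X] :=
  if r = c then pp k b (r+1) + pp k b (r+2) - X * C (m (r+1))
  else if r + 1 = c then - pp k b (c+1)
  else if c + 1 = r then - pp k b (r+1) else 0

noncomputable def EF (m k b : ℕ → ℝ) (j r c : ℕ) : ℝ[X] :=
  if r = c ∧ r = j - 1 then pp k b j - X * C (m (r+1)) else EE m k b r c

lemma sysMat_eq (m k b : ℕ → ℝ) (j : ℕ) :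
    sysMat m k b j = Matrix.of fun r c : Fin j => EF m k b j r c := by
  refine Matrix.ext fun r c => ?_
  simp only [sysMat, triMat, EF, EE, pp, Matrix.sub_apply, Matrix.map_apply, Matrix.of_apply,
    Matrix.smul_apply, Matrix.add_apply, Matrix.diagonal_apply, Fin.ext_iff, smul_eq_mul]
  split_ifs <;> first | (exfalso; omega) | (simp; try ring)

lemma f_eq (m k b : ℕ → ℝ) (j : ℕ) : fpoly m k b j = LL (EF m k b j) j := by
  rw [fpoly, sysMat_eq]; rfl

lemma LL_congr {R : Type*} [CommRing R] (A B : ℕ → ℕ → R) (n : ℕ)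
    (h : ∀ r c, r < n → c < n → A r c = B r c) : LL A n = LL B n := by
  unfold LL; congr 1; ext r c; exact h r c r.2 c.2

lemma g_eq (m k b : ℕ → ℝ) (j : ℕ) : gpoly m k b (j+1) = LL (EE m k b) j := by
  rw [gpoly, sysMat_eq]
  have : LL (EE m k b) j = LL (EF m k b (j+1)) j := by
    apply LL_congr
    intro r c hr hc
    rw [EF, if_neg]; omega
  rw [this]; rfl

lemma g_rec (m k b : ℕ → ℝ) (j : ℕ) :
    gpoly m k b (j+2) = fpoly m k b (j+1) + pp k b (j+2) * gpoly m k b (j+1) ∧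
    fpoly m k b (j+2) = pp k b (j+2) * fpoly m k b (j+1) - X * C (m (j+2)) * gpoly m k b (j+2) := by
  have hw : ∀ i, LL (EE m k b) (i+2) = (pp k b (i+2) + pp k b (i+3) - X * C (m (i+2))) *
      LL (EE m k b) (i+1) - pp k b (i+2) ^ 2 * LL (EE m k b) i := by
    intro i
    rw [LL_rec]
    · have h0 : ¬ (i + 1 + 1 = i) := by omega
      simp [EE, h0]; ring_nf; simp
    · intro c hc; rw [EE, if_neg (by omega), if_neg (by omega), if_neg (by omega)]
    · intro c hc; rw [EE, if_neg (by omega), if_neg (by omega), if_neg (by omega)]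
  have hf : ∀ i, fpoly m k b (i+2) = (pp k b (i+2) - X * C (m (i+2))) *
      LL (EE m k b) (i+1) - pp k b (i+2) ^ 2 * LL (EE m k b) i := by
    intro i
    rw [f_eq, LL_rec]
    · rw [LL_congr (EF m k b (i+2)) (EE m k b) (i+1), LL_congr (EF m k b (i+2)) (EE m k b) i]
      · have h0 : ¬ (i + 1 + 1 = i) := by omega
        simp [EF, EE, h0]; ring_nf; simp
      · intro r c hr hc
        rw [EF, if_neg]; omega
      · intro r c hr hc
        rw [EF, if_neg]; omega
    · intro c hc; rw [EF, if_neg (by omega), EE, if_neg (by omega), if_neg (by omega), if_neg (by omega)]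
    · intro c hc; rw [EF, if_neg (by omega), EE, if_neg (by omega), if_neg (by omega), if_neg (by omega)]
  have h1 : gpoly m k b (j+2) = fpoly m k b (j+1) + pp k b (j+2) * gpoly m k b (j+1) := by
    rw [g_eq, g_eq]
    cases j with
    | zero =>
      rw [f_eq]; simp [LL, EF, EE, Matrix.det_unique]; ring
    | succ i => rw [hw, hf]; ring
  refine ⟨h1, ?_⟩
  have : fpoly m k b (j+1) = gpoly m k b (j+2) - pp k b (j+2) * gpoly m k b (j+1) := by
    rw [h1]; ring
  rw [this, hf, g_eq, g_eq]; ring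

end rec_part
section prec_part

/-- product of differences -/
noncomputable def QQ (T : Finset ℝ) (x : ℝ) : ℝ := ∏ y ∈ T.erase x, (x - y)

/-- nodal polynomial -/
noncomputable def PP (T : Finset ℝ) : ℝ[X] := ∏ y ∈ T, (X - C y)

lemma PP_eval (T : Finset ℝ) (x : ℝ) : (PP T).eval x = ∏ y ∈ T, (x - y) := by
  simp [PP, eval_prod]

lemma PP_monic (T : Finset ℝ) : (PP T).Monic := by
  unfold PP; exact monic_prod_of_monic _ _ (fun i _ => monic_X_sub_C i)

lemma PP_natDegree (T : Finset ℝ) : (PP T).natDegree = T.card := by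
  rw [PP, natDegree_prod_of_monic _ _ (fun i _ => monic_X_sub_C i)]; simp

lemma PP_coeff (T : Finset ℝ) : (PP T).coeff T.card = 1 := by
  have := PP_monic T
  rw [Monic, leadingCoeff, PP_natDegree] at this
  exact this

lemma poly_eq_prod (N : ℝ[X]) (s : ℕ) (β : Fin s → ℝ) (hβ : Function.Injective β)
    (h : ∀ i, N.eval (β i) = 0) (hd : N.natDegree ≤ s) :
    N = C (N.coeff s) * ∏ i, (X - C (β i)) := by
  set P : ℝ[X] := ∏ i, (X - C (β i)) with hP
  have hPm : P.Monic := monic_prod_of_monic _ _ (fun i _ => monic_X_sub_C _)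
  have hPd : P.natDegree = s := by
    rw [hP, natDegree_prod_of_monic _ _ (fun i _ => monic_X_sub_C _)]; simp
  have hdvd : P ∣ N := by
    apply Finset.prod_dvd_of_coprime
    · intro i _ l _ hil
      exact isCoprime_X_sub_C_of_isUnit_sub (sub_ne_zero.mpr (hβ.ne hil)).isUnit
    · intro i _
      exact dvd_iff_isRoot.mpr (h i)
  obtain ⟨q, hq⟩ := hdvd
  have hq0 : q.natDegree = 0 := by
    by_cases hz : q = 0
    · simp [hz]
    · rw [hq, hPm.natDegree_mul' hz, hPd] at hd; omega
  obtain ⟨a, rfl⟩ := natDegree_eq_zero.mp hq0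
  have : N.coeff s = a := by
    have h2 : P.coeff s = 1 := by rw [← hPd]; exact hPm
    rw [hq, coeff_mul_C, h2, one_mul]
  rw [this, hq, mul_comm]

/-- a polynomial of degree at most `s` far out -/
lemma far_right (N D : ℝ[X]) (s : ℕ) (hs : 0 < s) (hN : N.natDegree ≤ s) (hD : D.natDegree ≤ s)
    (h : 0 < N.coeff s * D.coeff s) (a : ℝ) : ∃ w, a < w ∧ 0 < N.eval w * D.eval w := by
  have hN' : N.natDegree = s :=
    le_antisymm hN (le_natDegree_of_ne_zero (left_ne_zero_of_mul h.ne'))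
  have hD' : D.natDegree = s :=
    le_antisymm hD (le_natDegree_of_ne_zero (right_ne_zero_of_mul h.ne'))
  have hN0 : N ≠ 0 := by rintro rfl; simp at h
  have hD0 : D ≠ 0 := by rintro rfl; simp at h
  have := (N*D).tendsto_atTop_of_leadingCoeff_nonneg (natDegree_pos_iff_degree_pos.mp (by
    rw [natDegree_mul hN0 hD0]; omega)) (by
    rw [leadingCoeff_mul, leadingCoeff, leadingCoeff, hN', hD']; exact h.le)
  obtain ⟨w, hw1, hw2⟩ := ((this.eventually_gt_atTop 0).and (Filter.eventually_gt_atTop a)).exists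
  exact ⟨w, hw2, by simpa using hw1⟩

lemma far_left (N D : ℝ[X]) (s : ℕ) (hs : 0 < s) (hN : N.natDegree ≤ s) (hD : D.natDegree ≤ s)
    (h : 0 < N.coeff s * D.coeff s) (a : ℝ) : ∃ w, w < a ∧ 0 < N.eval w * D.eval w := by
  have key : ∀ P : ℝ[X], (P.comp (-X)).coeff s = (-1)^s * P.coeff s := by
    intro P
    have h0 : (-X : ℝ[X]) = C (-1) * X := by simp
    rw [h0, comp_C_mul_X_coeff, mul_comm]
  obtain ⟨w, h1, h2⟩ := far_right (N.comp (-X)) (D.comp (-X)) s hs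
    (by rw [natDegree_comp]; simpa using hN)
    (by rw [natDegree_comp]; simpa using hD)
    (by rw [key, key]
        have : ((-1:ℝ)^s)*(-1)^s = 1 := by rw [← mul_pow]; simp
        calc 0 < ((-1:ℝ)^s*(-1)^s) * (N.coeff s * D.coeff s) := by rw [this]; simpa using h
          _ = _ := by ring) (-a)
  exact ⟨-w, by linarith, by simpa [eval_comp] using h2⟩

lemma poly_ivt (N : ℝ[X]) (a b : ℝ) (hab : a < b) (h : N.eval a * N.eval b < 0) :
    ∃ y, a < y ∧ y < b ∧ N.eval y = 0 := by
  have hc : ContinuousOn (fun x => N.eval x) (Set.Icc a b) := N.continuous.continuousOn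
  rcases mul_neg_iff.mp h with ⟨h1, h2⟩ | ⟨h1, h2⟩
  · obtain ⟨y, hy, h3⟩ := intermediate_value_Ioo' hab.le hc ⟨h2, h1⟩
    exact ⟨y, hy.1, hy.2, h3⟩
  · obtain ⟨y, hy, h3⟩ := intermediate_value_Ioo hab.le hc ⟨h1, h2⟩
    exact ⟨y, hy.1, hy.2, h3⟩

lemma QQ_adj (T : Finset ℝ) (w x : ℝ) (hw : w ∈ T) (hx : x ∈ T) (hwx : w < x)
    (h : ∀ z ∈ T, z ≤ w ∨ x ≤ z) : QQ T w * QQ T x < 0 := by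
  have h1 : QQ T w = (w - x) * ∏ y ∈ (T.erase w).erase x, (w - y) := by
    rw [QQ, Finset.mul_prod_erase _ _ (Finset.mem_erase.mpr ⟨hwx.ne', hx⟩)]
  have h2 : QQ T x = (x - w) * ∏ y ∈ (T.erase w).erase x, (x - y) := by
    rw [QQ, Finset.erase_right_comm, Finset.mul_prod_erase _ (fun y => x - y) (Finset.mem_erase.mpr ⟨hwx.ne, hw⟩)]
  have h3 : 0 < ∏ y ∈ (T.erase w).erase x, ((w - y) * (x - y)) := by
    apply Finset.prod_pos
    intro z hz
    simp only [Finset.mem_erase] at hz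
    rcases h z hz.2.2 with h4 | h4
    · have : z < w := lt_of_le_of_ne h4 hz.2.1
      apply mul_pos <;> linarith
    · have : x < z := lt_of_le_of_ne h4 (Ne.symm hz.1)
      apply mul_pos_of_neg_of_neg <;> linarith
  rw [Finset.prod_mul_distrib] at h3
  rw [h1, h2]
  have : 0 < (x - w)^2 := by have := sub_pos.mpr hwx; positivity
  nlinarith [mul_pos this h3]

lemma QQ_out (T : Finset ℝ) (w x : ℝ) (hx : x ∈ T) 
    (h : ∀ z ∈ T, z ≠ x → 0 < (x - z) * (w - z)) : 0 < QQ T x * (PP T).eval w * (w - x) ∨ w = x := by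
  by_cases hwx : w = x
  · right; exact hwx
  left
  rw [PP_eval, ← Finset.mul_prod_erase T _ hx, QQ]
  have h3 : 0 < ∏ y ∈ T.erase x, ((x - y) * (w - y)) := by
    apply Finset.prod_pos
    intro z hz
    exact h z (Finset.mem_of_mem_erase hz) (Finset.ne_of_mem_erase hz)
  rw [Finset.prod_mul_distrib] at h3
  have : 0 < (w - x)^2 := by have := sub_ne_zero.mpr hwx; positivity
  nlinarith [mul_pos this h3]

lemma left_root (T : Finset ℝ) (c : ℝ) (N : ℝ[X]) (hd : N.natDegree ≤ T.card)
    (hc : 0 < c * N.coeff T.card) (h : ∀ x ∈ T, 0 < N.eval x * (c * QQ T x)) (x : ℝ) (hx : x ∈ T) :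
    ∃ y, y < x ∧ N.eval y = 0 ∧ ∀ z ∈ T, z < x → z < y := by
  have hc2 : 0 < c^2 := by have := left_ne_zero_of_mul hc.ne'; positivity
  rcases (T.filter (· < x)).eq_empty_or_nonempty with he | hne
  · have hmin : ∀ z ∈ T, x ≤ z := by
      intro z hz; by_contra hlt
      have : z ∈ T.filter (· < x) := by simp [hz]; linarith
      simp [he] at this
    obtain ⟨w, hw, hw2⟩ := far_left N (C c * PP T) T.card (Finset.card_pos.mpr ⟨x, hx⟩) hd
      ((natDegree_C_mul_le _ _).trans (PP_natDegree T).le)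
      (by rw [coeff_C_mul, PP_coeff]; linarith) x
    have h1 := QQ_out T w x hx (fun z hz hzx => by
      have := lt_of_le_of_ne (hmin z hz) (Ne.symm hzx)
      apply mul_pos_of_neg_of_neg <;> linarith)
    have h1 := h1.resolve_right hw.ne
    have h2 := h x hx
    simp only [eval_mul, eval_C] at hw2
    have h4 : N.eval w * N.eval x < 0 := by
      have h5 : QQ T x * (PP T).eval w < 0 := by
        by_contra h6; push Not at h6
        nlinarith
      have h7 := mul_pos hw2 h2
      have h8 : 0 < (N.eval w * N.eval x) * (c^2 * (QQ T x * (PP T).eval w)) := by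
        calc _ < _ := h7
          _ = _ := by ring
      have h9 : c^2 * (QQ T x * (PP T).eval w) < 0 := by nlinarith
      by_contra h6; push Not at h6
      nlinarith
    obtain ⟨y, hy1, hy2, hy3⟩ := poly_ivt N w x hw h4
    exact ⟨y, hy2, hy3, fun z hz hzx => absurd (hmin z hz) (not_le.mpr hzx)⟩
  · set w := (T.filter (· < x)).max' hne with hw
    have hwm := Finset.max'_mem _ hne
    rw [← hw] at hwm
    simp only [Finset.mem_filter] at hwm
    have hle : ∀ z ∈ T, z < x → z ≤ w := fun z hz hzx => Finset.le_max' _ _ (by simp [hz, hzx])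
    have h1 := QQ_adj T w x hwm.1 hx hwm.2 (fun z hz => by
      rcases lt_or_ge z x with h | h
      · left; exact hle z hz h
      · right; exact h)
    have h4 : N.eval w * N.eval x < 0 := by
      have h8 : 0 < (N.eval w * N.eval x) * (c^2 * (QQ T w * QQ T x)) := by
        calc _ < _ := mul_pos (h w hwm.1) (h x hx)
          _ = _ := by ring
      have h9 : c^2 * (QQ T w * QQ T x) < 0 := by nlinarith
      by_contra h6; push Not at h6
      nlinarith
    obtain ⟨y, hy1, hy2, hy3⟩ := poly_ivt N w x hwm.2 h4
    exact ⟨y, hy2, hy3, fun z hz hzx => (hle z hz hzx).trans_lt hy1⟩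

lemma right_root (T : Finset ℝ) (c : ℝ) (N : ℝ[X]) (hd : N.natDegree ≤ T.card)
    (hc : 0 < c * N.coeff T.card) (h : ∀ x ∈ T, N.eval x * (c * QQ T x) < 0) (x : ℝ) (hx : x ∈ T) :
    ∃ y, x < y ∧ N.eval y = 0 ∧ ∀ z ∈ T, x < z → y < z := by
  have hc2 : 0 < c^2 := by have := left_ne_zero_of_mul hc.ne'; positivity
  rcases (T.filter (x < ·)).eq_empty_or_nonempty with he | hne
  · have hmin : ∀ z ∈ T, z ≤ x := by
      intro z hz; by_contra hlt
      have : z ∈ T.filter (x < ·) := by simp [hz]; linarith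
      simp [he] at this
    obtain ⟨w, hw, hw2⟩ := far_right N (C c * PP T) T.card (Finset.card_pos.mpr ⟨x, hx⟩) hd
      ((natDegree_C_mul_le _ _).trans (PP_natDegree T).le)
      (by rw [coeff_C_mul, PP_coeff]; linarith) x
    have h1 := QQ_out T w x hx (fun z hz hzx => by
      have := lt_of_le_of_ne (hmin z hz) hzx
      apply mul_pos <;> linarith)
    have h1 := h1.resolve_right hw.ne'
    have h2 := h x hx
    simp only [eval_mul, eval_C] at hw2
    have h4 : N.eval x * N.eval w < 0 := by
      have h5 : 0 < QQ T x * (PP T).eval w := by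
        by_contra h6; push Not at h6
        nlinarith
      have h7 := mul_neg_of_pos_of_neg hw2 h2
      have h8 : (N.eval x * N.eval w) * (c^2 * (QQ T x * (PP T).eval w)) < 0 := by
        calc _ = _ := by ring
          _ < _ := h7
      have h9 : 0 < c^2 * (QQ T x * (PP T).eval w) := by positivity
      by_contra h6; push Not at h6
      nlinarith
    obtain ⟨y, hy1, hy2, hy3⟩ := poly_ivt N x w hw h4
    exact ⟨y, hy1, hy3, fun z hz hzx => absurd (hmin z hz) (not_le.mpr hzx)⟩
  · set w := (T.filter (x < ·)).min' hne with hw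
    have hwm := Finset.min'_mem _ hne
    rw [← hw] at hwm
    simp only [Finset.mem_filter] at hwm
    have hle : ∀ z ∈ T, x < z → w ≤ z := fun z hz hzx => Finset.min'_le _ _ (by simp [hz, hzx])
    have h1 := QQ_adj T x w hx hwm.1 hwm.2 (fun z hz => by
      rcases lt_or_ge x z with h | h
      · right; exact hle z hz h
      · left; exact h)
    have h4 : N.eval x * N.eval w < 0 := by
      have h8 : 0 < (N.eval x * N.eval w) * (c^2 * (QQ T x * QQ T w)) := by
        calc _ < _ := mul_pos_of_neg_of_neg (h x hx) (h w hwm.1)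
          _ = _ := by ring
      have h9 : c^2 * (QQ T x * QQ T w) < 0 := by nlinarith
      by_contra h6; push Not at h6
      nlinarith
    obtain ⟨y, hy1, hy2, hy3⟩ := poly_ivt N x w hwm.2 h4
    exact ⟨y, hy1, hy3, fun z hz hzx => hy2.trans_le (hle z hz hzx)⟩

lemma PP_fin (T : Finset ℝ) : PP T = ∏ i : Fin T.card, (X - C (T.orderEmbOfFin rfl i)) := by
  have h := Finset.map_orderEmbOfFin_univ T (k := T.card) rfl
  conv_lhs => rw [PP, ← h, Finset.prod_map]
  rfl

lemma prec_left (T : Finset ℝ) (hT : T.Nonempty) (c : ℝ) (N : ℝ[X]) (hd : N.natDegree ≤ T.card)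
    (hc : 0 < c * N.coeff T.card) (h : ∀ x ∈ T, 0 < N.eval x * (c * QQ T x)) :
    Prec N (C c * PP T) := by
  set α := T.orderEmbOfFin (k := T.card) rfl with hα
  have hm : ∀ i, α i ∈ T := fun i => Finset.orderEmbOfFin_mem T rfl i
  choose β h1 h2 h3 using fun i => left_root T c N hd hc h (α i) (hm i)
  have hβ : StrictMono β := fun i l hil => (h1 i).trans (h3 l _ (hm i) (α.strictMono hil))
  refine ⟨T.card, c, N.coeff T.card, α, β, Finset.card_pos.mpr hT, hc, α.strictMono, hβ, ?_,
    poly_eq_prod N _ β hβ.injective h2 hd, h1, fun i hi => h3 _ _ (hm i) (α.strictMono ?_)⟩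
  · rw [PP_fin]
  · simp [Fin.lt_def]

lemma prec_right (T : Finset ℝ) (hT : T.Nonempty) (c : ℝ) (N : ℝ[X]) (hd : N.natDegree ≤ T.card)
    (hc : 0 < c * N.coeff T.card) (h : ∀ x ∈ T, N.eval x * (c * QQ T x) < 0) :
    Prec (C c * PP T) N := by
  set α := T.orderEmbOfFin (k := T.card) rfl with hα
  have hm : ∀ i, α i ∈ T := fun i => Finset.orderEmbOfFin_mem T rfl i
  choose β h1 h2 h3 using fun i => right_root T c N hd hc h (α i) (hm i)
  have hβ : StrictMono β := fun i l hil => (h3 i _ (hm l) (α.strictMono hil)).trans (h1 l)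
  refine ⟨T.card, N.coeff T.card, c, β, α, Finset.card_pos.mpr hT, by linarith, hβ, α.strictMono,
    poly_eq_prod N _ β hβ.injective h2 hd, ?_, h1, fun i hi => h3 _ _ (hm _) (α.strictMono ?_)⟩
  · rw [PP_fin]
  · simp [Fin.lt_def]

lemma QQ_map {s : ℕ} (α : Fin s → ℝ) (hα : Function.Injective α) (i : Fin s) :
    QQ (Finset.univ.map ⟨α, hα⟩) (α i) = ∏ l ∈ Finset.univ.erase i, (α i - α l) := by
  have : (Finset.univ.map ⟨α, hα⟩).erase (α i) = (Finset.univ.erase i).map ⟨α, hα⟩ := by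
    rw [Finset.map_erase]; rfl
  rw [QQ, this, Finset.prod_map]; rfl

lemma prec_elim (N D : ℝ[X]) (h : Prec N D) : ∃ (T U : Finset ℝ) (c d : ℝ),
    T.Nonempty ∧ T.card = U.card ∧ 0 < c * d ∧ D = C c * PP T ∧ N = C d * PP U ∧
    (∀ x ∈ T, 0 < N.eval x * (c * QQ T x)) ∧ (∀ x ∈ U, D.eval x * (d * QQ U x) < 0) ∧
    (∀ x ∈ U, ∃ y ∈ T, x < y) := by
  obtain ⟨s, c, d, α, β, hs, hcd, hα, hβ, hD, hN, h1, h2⟩ := h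
  have h3 : ∀ i l, i < l → α i < β l := by
    intro i l hil
    have hi : (i:ℕ) + 1 < s := by have := l.2; have := Fin.lt_def.mp hil; omega
    exact (h2 i hi).trans_le (hβ.monotone (by rw [Fin.le_def]; exact hil))
  refine ⟨Finset.univ.map ⟨α, hα.injective⟩, Finset.univ.map ⟨β, hβ.injective⟩, c, d, ?_, by simp,
    hcd, by rw [hD, PP, Finset.prod_map]; rfl, by rw [hN, PP, Finset.prod_map]; rfl, ?_, ?_, ?_⟩
  · exact ⟨α ⟨0, hs⟩, by simp⟩
  · intro x hx
    obtain ⟨i, _, rfl⟩ := Finset.mem_map.mp hx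
    change 0 < N.eval (α i) * (c * QQ _ (α i))
    rw [QQ_map, hN]
    simp only [eval_mul, eval_C, eval_prod, eval_sub, eval_X]
    rw [← Finset.mul_prod_erase Finset.univ _ (Finset.mem_univ i)]
    have hp : 0 < ∏ l ∈ Finset.univ.erase i, ((α i - β l) * (α i - α l)) := by
      apply Finset.prod_pos
      intro l hl
      rcases lt_or_gt_of_ne (Finset.ne_of_mem_erase hl) with h | h
      · have := hα h; have := h1 l
        apply mul_pos <;> linarith
      · have := hα h; have := h3 i l h
        apply mul_pos_of_neg_of_neg <;> linarith
    rw [Finset.prod_mul_distrib] at hp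
    have := sub_pos.mpr (h1 i)
    calc 0 < (c * d) * ((α i - β i) * ((∏ l ∈ Finset.univ.erase i, (α i - β l)) * ∏ l ∈ Finset.univ.erase i, (α i - α l))) := by positivity
      _ = _ := by ring
  · intro x hx
    obtain ⟨i, _, rfl⟩ := Finset.mem_map.mp hx
    change D.eval (β i) * (d * QQ _ (β i)) < 0
    rw [QQ_map, hD]
    simp only [eval_mul, eval_C, eval_prod, eval_sub, eval_X]
    rw [← Finset.mul_prod_erase Finset.univ _ (Finset.mem_univ i)]
    have hp : 0 < ∏ l ∈ Finset.univ.erase i, ((β i - α l) * (β i - β l)) := by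
      apply Finset.prod_pos
      intro l hl
      rcases lt_or_gt_of_ne (Finset.ne_of_mem_erase hl) with h | h
      · have := hβ h; have := h3 l i h
        apply mul_pos <;> linarith
      · have := hβ h; have := h1 l
        apply mul_pos_of_neg_of_neg <;> linarith
    rw [Finset.prod_mul_distrib] at hp
    have := sub_pos.mpr (h1 i)
    have : 0 < (c * d) * ((α i - β i) * ((∏ l ∈ Finset.univ.erase i, (β i - α l)) * ∏ l ∈ Finset.univ.erase i, (β i - β l))) := by positivity
    rw [← neg_pos]
    calc 0 < _ := this
      _ = _ := by ring
  · intro x hx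
    obtain ⟨i, _, rfl⟩ := Finset.mem_map.mp hx
    exact ⟨α i, by simp, h1 i⟩

end prec_part
section main_part

lemma prec_coprime (N D : ℝ[X]) (h : Prec N D) : IsCoprime D N := by
  obtain ⟨T, U, c, d, hT, hTU, hcd, hD, hN, h1, h2, h3⟩ := prec_elim N D h
  have hc : c ≠ 0 := left_ne_zero_of_mul hcd.ne'
  rw [hD, isCoprime_mul_unit_left_left (isUnit_C.mpr hc.isUnit), PP]
  apply IsCoprime.prod_left
  intro x hx
  have hne : N.eval x ≠ 0 := left_ne_zero_of_mul (h1 x hx).ne'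
  rw [(irreducible_X_sub_C x).coprime_iff_not_dvd, dvd_iff_isRoot]
  exact hne

lemma prec_smul (u : ℝ) (hu : u ≠ 0) (N D : ℝ[X]) (h : Prec N D) :
    Prec (C u * N) (C u * D) := by
  obtain ⟨s, c, d, α, β, hs, hcd, hα, hβ, hD, hN, h1, h2⟩ := h
  refine ⟨s, u * c, u * d, α, β, hs, ?_, hα, hβ, ?_, ?_, h1, h2⟩
  · have : 0 < u^2 := by positivity
    nlinarith [mul_pos this hcd]
  · rw [hD, C_mul, mul_assoc]
  · rw [hN, C_mul, mul_assoc]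

lemma prec_gcd (e a b a1 b1 : ℝ[X]) (he : e ≠ 0) (ha : a = e * a1) (hb : b = e * b1)
    (h : Prec (-X * b1) a1) : Prec (-X * b / gcd a b) (a / gcd a b) := by
  have hco : IsCoprime a1 b1 := (prec_coprime _ _ h).of_mul_right_right
  have hass : Associated (gcd a b) e := by
    rw [ha, hb]
    refine (gcd_mul_left' e a1 b1).trans ?_
    have : Associated (gcd a1 b1) 1 := by
      rw [associated_one_iff_isUnit]
      exact (gcd_isUnit_iff a1 b1).mpr hco
    simpa using this.mul_left e
  obtain ⟨u, hu⟩ := hass.symm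
  obtain ⟨v, hv, hv2⟩ := isUnit_iff.mp u.isUnit
  have hv0 : v ≠ 0 := hv.ne_zero
  have hg : gcd a b = e * C v := by rw [← hu, hv2]
  have hg0 : e * C v ≠ 0 := mul_ne_zero he (by simpa using hv0)
  have hvv : C v * C v⁻¹ = (1 : ℝ[X]) := by rw [← C_mul, mul_inv_cancel₀ hv0, C_1]
  have e1 : a / gcd a b = C v⁻¹ * a1 := by
    have h0 : a = (e * C v) * (C v⁻¹ * a1) := by
      rw [ha]; linear_combination (-e * a1) * hvv
    rw [hg, h0, mul_div_cancel_left₀ _ hg0]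
  have e2 : -X * b / gcd a b = C v⁻¹ * (-X * b1) := by
    have h0 : -X * b = (e * C v) * (C v⁻¹ * (-X * b1)) := by
      rw [hb]; linear_combination (e * X * b1) * hvv
    rw [hg, h0, mul_div_cancel_left₀ _ hg0]
  rw [e1, e2]
  exact prec_smul _ (inv_ne_zero hv0) _ _ h

lemma prec_add (m : ℝ) (hm : 0 < m) (N D : ℝ[X]) (h : Prec N D) : Prec N (D + C m * N) := by
  obtain ⟨T, U, c, d, hT, hTU, hcd, hD, hN, h1, h2, h3⟩ := prec_elim N D h
  have hU : U.Nonempty := by rw [← Finset.card_pos, ← hTU]; exact hT.card_pos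
  have hd2 : 0 < d^2 := by have := right_ne_zero_of_mul hcd.ne'; positivity
  have hNd : N.natDegree ≤ U.card := by
    rw [hN]; exact (natDegree_C_mul_le _ _).trans (PP_natDegree U).le
  have hDd : D.natDegree ≤ U.card := by
    rw [hD, ← hTU]; exact (natDegree_C_mul_le _ _).trans (PP_natDegree T).le
  have hNc : N.coeff U.card = d := by rw [hN, coeff_C_mul, PP_coeff, mul_one]
  have hDc : D.coeff U.card = c := by rw [hD, ← hTU, coeff_C_mul, PP_coeff, mul_one]
  have hx0 : ∀ x ∈ U, N.eval x = 0 := by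
    intro x hx
    rw [hN, eval_mul, PP_eval, Finset.prod_eq_zero hx (sub_self x), mul_zero]
  have := prec_right U hU d (D + C m * N)
    ((natDegree_add_le _ _).trans (max_le hDd ((natDegree_C_mul_le _ _).trans hNd)))
    (by rw [coeff_add, coeff_C_mul, hNc, hDc]; nlinarith)
    (fun x hx => by
      have := h2 x hx
      simpa [hx0 x hx] using this)
  rwa [← hN] at this

/-- the main step with `N = p B - X A`, `D = p A`, for `b > 0`, new pole -/
lemma step_new (k b : ℝ) (hk : 0 < k) (hb : 0 < b) (T : Finset ℝ) (c d : ℝ) (A B : ℝ[X])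
    (hcd : 0 < c * d) (hA : A = C c * PP T) (hBd : B.natDegree ≤ T.card)
    (hBc : B.coeff T.card = d) (h : ∀ x ∈ T, 0 < B.eval x * (c * QQ T x)) (hr : k / b ∉ T) :
    Prec ((C k - X * C b) * B - X * A) ((C k - X * C b) * A) := by
  have hb0 := hb.ne'
  have hc0 := left_ne_zero_of_mul hcd.ne'
  have hp : (C k - X * C b) = C (-b) * (X - C (k / b)) := by
    have : k = b * (k / b) := by field_simp
    conv_lhs => rw [this]
    rw [C_mul, C_neg]; ring
  have hD : (C k - X * C b) * A = C (-b * c) * PP (insert (k/b) T) := by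
    rw [hp, hA, PP, PP, Finset.prod_insert hr, C_mul]; ring
  have hcard : (insert (k/b) T).card = T.card + 1 := Finset.card_insert_of_notMem hr
  have hAd : A.natDegree ≤ T.card := by
    rw [hA]; exact (natDegree_C_mul_le _ _).trans (PP_natDegree T).le
  have hAc : A.coeff T.card = c := by rw [hA, coeff_C_mul, PP_coeff, mul_one]
  rw [hD]
  apply prec_left
  · exact Finset.insert_nonempty _ _
  · rw [hcard]
    refine (natDegree_sub_le _ _).trans (max_le ?_ ?_)
    · refine natDegree_mul_le.trans ?_
      have : (C k - X * C b).natDegree ≤ 1 := by compute_degree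
      omega
    · refine natDegree_mul_le.trans ?_
      simp; omega
  · rw [hcard, sub_mul, mul_assoc X, coeff_sub, coeff_sub, coeff_X_mul, coeff_X_mul, coeff_C_mul,
      coeff_C_mul, hAc, hBc, coeff_eq_zero_of_natDegree_lt (by omega)]
    have : 0 < c^2 := by positivity
    nlinarith [mul_pos hb this, mul_pos (mul_pos hb hb) hcd]
  · intro x hx
    rcases Finset.mem_insert.mp hx with rfl | hx
    · have : QQ (insert (k/b) T) (k/b) = (PP T).eval (k/b) := by
        rw [QQ, Finset.erase_insert hr, PP_eval]
      have hne : (PP T).eval (k/b) ≠ 0 := by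
        rw [PP_eval, Finset.prod_ne_zero_iff]
        intro y hy hy2
        rw [sub_eq_zero] at hy2
        exact hr (hy2 ▸ hy)
      rw [this, hA]
      simp only [eval_sub, eval_mul, eval_C, eval_X]
      have h1 : (k - k / b * b) = 0 := by field_simp; ring
      rw [h1]
      set P := (PP T).eval (k/b)
      have : 0 < k * (c * P)^2 := by positivity
      calc 0 < _ := this
        _ = _ := by field_simp; ring
    · have hxr : x ≠ k / b := by rintro rfl; exact hr hx
      have h1 : QQ (insert (k/b) T) x = (x - k/b) * QQ T x := by
        rw [QQ, Finset.erase_insert_of_ne hxr.symm, Finset.prod_insert (by simp [hr]), QQ]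
      have h2 : A.eval x = 0 := by
        rw [hA, eval_mul, PP_eval, Finset.prod_eq_zero hx (sub_self x), mul_zero]
      rw [h1, hp]
      simp only [eval_sub, eval_mul, eval_C, eval_X, h2]
      have : 0 < (b * (x - k/b))^2 := by have := sub_ne_zero.mpr hxr; positivity
      calc 0 < _ := mul_pos this (h x hx)
        _ = _ := by ring

/-- `b > 0`, old pole -/
lemma step_old (k b : ℝ) (hk : 0 < k) (hb : 0 < b) (T : Finset ℝ) (c d : ℝ) (A B : ℝ[X])
    (hcd : 0 < c * d) (hA : A = C c * PP T) (hBd : B.natDegree ≤ T.card)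
    (hBc : B.coeff T.card = d) (h : ∀ x ∈ T, 0 < B.eval x * (c * QQ T x)) (hr : k / b ∈ T) :
    Prec (C (-b) * B - X * (C c * PP (T.erase (k/b)))) (C (-b) * A) := by
  have hb0 := hb.ne'
  have hc0 := left_ne_zero_of_mul hcd.ne'
  have hcard : (T.erase (k/b)).card + 1 = T.card := Finset.card_erase_add_one hr
  rw [hA, ← mul_assoc (C (-b)), ← C_mul]
  apply prec_left
  · exact ⟨_, hr⟩
  · refine (natDegree_sub_le _ _).trans (max_le ((natDegree_C_mul_le _ _).trans hBd) ?_)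
    refine natDegree_mul_le.trans ?_
    have := (natDegree_C_mul_le c (PP (T.erase (k/b))))
    rw [PP_natDegree] at this
    simp only [natDegree_X]; omega
  · rw [coeff_sub, coeff_C_mul, hBc]
    conv in (X * _) => rw [X_mul]
    rw [← hcard, coeff_mul_X, coeff_C_mul, PP_coeff]
    have : 0 < c^2 := by positivity
    nlinarith [mul_pos hb this, mul_pos (mul_pos hb hb) hcd]
  · intro x hx
    by_cases hxr : x = k / b
    · subst hxr
      have : (PP (T.erase (k/b))).eval (k/b) = QQ T (k/b) := by
        rw [QQ, PP_eval]
      have h1 := h _ hx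
      have hne : QQ T (k/b) ≠ 0 := by
        intro h0; rw [h0] at h1; simp at h1
      simp only [eval_sub, eval_mul, eval_C, eval_X, this]
      set P := QQ T (k/b)
      have : 0 < k * (c * P)^2 + b^2 * (eval (k/b) B * (c * P)) := by positivity
      calc 0 < _ := this
        _ = _ := by field_simp; ring
    · have h2 : (PP (T.erase (k/b))).eval x = 0 := by
        rw [PP_eval, Finset.prod_eq_zero (Finset.mem_erase.mpr ⟨hxr, hx⟩) (sub_self x)]
      simp only [eval_sub, eval_mul, eval_C, eval_X, h2]
      have : 0 < b^2 := by positivity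
      calc 0 < _ := mul_pos this (h x hx)
        _ = _ := by ring

/-- `b = 0` -/
lemma step_zero (m k : ℝ) (hm : 0 < m) (hk : 0 < k) (T : Finset ℝ) (hT : T.Nonempty) (c d : ℝ)
    (A B : ℝ[X])
    (hcd : 0 < c * d) (hA : A = C c * PP T) (hBd : B.natDegree ≤ T.card)
    (h : ∀ x ∈ T, 0 < B.eval x * (c * QQ T x)) :
    Prec (C k * B - X * A) (C k * A + C m * (C k * B - X * A)) := by
  have hc0 := left_ne_zero_of_mul hcd.ne'
  have hc2 : 0 < c^2 := by positivity
  have hAd : A.natDegree ≤ T.card := by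
    rw [hA]; exact (natDegree_C_mul_le _ _).trans (PP_natDegree T).le
  have hAc : A.coeff T.card = c := by rw [hA, coeff_C_mul, PP_coeff, mul_one]
  set N := C k * B - X * A with hN
  have hNd : N.natDegree ≤ T.card + 1 := by
    refine (natDegree_sub_le _ _).trans (max_le ?_ ?_)
    · exact ((natDegree_C_mul_le _ _).trans hBd).trans (Nat.le_succ _)
    · refine natDegree_mul_le.trans ?_
      simp; omega
  have hNc : N.coeff (T.card + 1) = -c := by
    rw [hN, coeff_sub, coeff_X_mul, coeff_C_mul, hAc, coeff_eq_zero_of_natDegree_lt (by omega)]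
    simp
  -- far right point
  obtain ⟨M, hM1, hM2⟩ := far_right N (C (-1) * (X * A)) (T.card + 1) (by omega) hNd
    (by refine (natDegree_C_mul_le _ _).trans (natDegree_mul_le.trans ?_)
        simp; omega)
    (by rw [hNc, coeff_C_mul, coeff_X_mul, hAc]; nlinarith) (max 0 (T.max' hT))
  have hM0 : 0 < M := (le_max_left _ _).trans_lt hM1
  have hMT : ∀ x ∈ T, x < M := fun x hx =>
    (Finset.le_max' _ _ hx).trans_lt ((le_max_right _ _).trans_lt hM1)
  have hMn : M ∉ T := fun hh => lt_irrefl _ (hMT M hh)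
  have hcard : (insert M T).card = T.card + 1 := Finset.card_insert_of_notMem hMn
  have hprec : Prec N (C (-c) * PP (insert M T)) := by
    apply prec_left
    · exact Finset.insert_nonempty _ _
    · rw [hcard]; exact hNd
    · rw [hcard, hNc]; nlinarith
    · intro x hx
      rcases Finset.mem_insert.mp hx with rfl | hx
      · have : QQ (insert x T) x = (PP T).eval x := by
          rw [QQ, Finset.erase_insert hMn, PP_eval]
        rw [this]
        rw [hA] at hM2
        simp only [eval_mul, eval_C, eval_X] at hM2
        have h3 : 0 < x * (eval x N * (-c * eval x (PP T))) := by
          calc 0 < _ := hM2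
            _ = _ := by ring
        exact (mul_pos_iff_of_pos_left hM0).mp h3
      · have hxr : x ≠ M := (hMT x hx).ne
        have h1 : QQ (insert M T) x = (x - M) * QQ T x := by
          rw [QQ, Finset.erase_insert_of_ne hxr.symm, Finset.prod_insert (by simp [hMn]), QQ]
        have h2 : A.eval x = 0 := by
          rw [hA, eval_mul, PP_eval, Finset.prod_eq_zero hx (sub_self x), mul_zero]
        rw [h1, hN]
        simp only [eval_sub, eval_mul, eval_C, eval_X, h2]
        have : 0 < k * (M - x) := mul_pos hk (sub_pos.mpr (hMT x hx))
        calc 0 < _ := mul_pos this (h x hx)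
          _ = _ := by ring
  obtain ⟨T', U, c', d', hT', hTU, hcd', hD', hN', h1, h2, h3⟩ := prec_elim _ _ hprec
  have hdeg : ∀ S : Finset ℝ, ∀ a : ℝ, a ≠ 0 → (C a * PP S).natDegree = S.card := by
    intro S a ha; rw [natDegree_C_mul ha, PP_natDegree]
  have hTc : T'.card = T.card + 1 := by
    have := congrArg natDegree hD'
    rw [hdeg _ _ (neg_ne_zero.mpr hc0), hdeg _ _ (left_ne_zero_of_mul hcd'.ne'), hcard] at this
    exact this.symm
  have hUc : U.card = T.card + 1 := by omega
  have hd' : d' = -c := by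
    rw [← hNc, hN', coeff_C_mul, ← hUc, PP_coeff, mul_one]
  have hUM : ∀ x ∈ U, x < M := by
    intro x hx
    obtain ⟨y, hy, hxy⟩ := h3 x hx
    have h0 : (C c' * PP T').eval y = 0 := by
      rw [eval_mul, PP_eval, Finset.prod_eq_zero hy (sub_self y), mul_zero]
    rw [← hD', eval_mul, PP_eval, eval_C] at h0
    rcases mul_eq_zero.mp h0 with h0 | h0
    · exact absurd h0 (neg_ne_zero.mpr hc0)
    · obtain ⟨z, hz, hz2⟩ := Finset.prod_eq_zero_iff.mp h0
      have hyz : y = z := sub_eq_zero.mp hz2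
      rcases Finset.mem_insert.mp hz with rfl | hz
      · rwa [← hyz]
      · exact hxy.trans (hyz ▸ hMT z hz)
  have hU : U.Nonempty := by rw [← Finset.card_pos]; omega
  have hfin := prec_right U hU d' (C k * A + C m * N)
    (by rw [hUc]
        refine (natDegree_add_le _ _).trans (max_le ?_ ((natDegree_C_mul_le _ _).trans hNd))
        exact ((natDegree_C_mul_le _ _).trans hAd).trans (Nat.le_succ _))
    (by rw [hUc, coeff_add, coeff_C_mul, coeff_C_mul, hNc, hd',
          coeff_eq_zero_of_natDegree_lt (by omega : A.natDegree < _)]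
        nlinarith)
    (fun x hx => by
      have hx0 : N.eval x = 0 := by
        rw [hN', eval_mul, PP_eval, Finset.prod_eq_zero hx (sub_self x), mul_zero]
      have h4 := h2 x hx
      have h5 : (C (-c) * PP (insert M T)).eval x = (M - x) * A.eval x := by
        rw [hA, PP, Finset.prod_insert hMn, ← PP]; simp; ring
      rw [h5] at h4
      have h6 : 0 < M - x := sub_pos.mpr (hUM x hx)
      have h7 : A.eval x * (d' * QQ U x) < 0 := by
        by_contra hh; push Not at hh
        nlinarith
      simp only [eval_add, eval_mul, eval_C, hx0]
      nlinarith)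
  rwa [← hN'] at hfin

lemma abs_step (m k b : ℝ) (hm : 0 < m) (hk : 0 < k) (hb : 0 ≤ b) (f g f' g' : ℝ[X])
    (hg' : g' = f + (C k - X * C b) * g) (hf' : f' = (C k - X * C b) * f - X * C m * g')
    (hyp : Prec (-X * g / gcd f g) (f / gcd f g)) :
    Prec (-X * g' / gcd f' g') (f' / gcd f' g') := by
  set e := gcd f g with he
  have he0 : e ≠ 0 := by
    intro h0
    obtain ⟨T, U, c, d, hT, hTU, hcd, hD, hN, h1, h2, h3⟩ := prec_elim _ _ hyp
    rw [h0, EuclideanDomain.div_zero] at hD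
    exact mul_ne_zero (C_ne_zero.mpr (left_ne_zero_of_mul hcd.ne')) (PP_monic T).ne_zero hD.symm
  have hf : f = e * (f / e) := (EuclideanDomain.mul_div_cancel' he0 (gcd_dvd_left f g)).symm
  have hg : g = e * (g / e) := (EuclideanDomain.mul_div_cancel' he0 (gcd_dvd_right f g)).symm
  rw [EuclideanDomain.mul_div_assoc _ (gcd_dvd_right f g)] at hyp
  generalize f / e = A at *
  generalize g / e = G at *
  obtain ⟨T, U, c, d, hT, hTU, hcd, hD, hN, h1, h2, h3⟩ := prec_elim _ _ hyp
  have hBd : (-X * G).natDegree ≤ T.card := by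
    rw [hN, hTU]; exact (natDegree_C_mul_le _ _).trans (PP_natDegree U).le
  have hBc : (-X * G).coeff T.card = d := by
    rw [hN, hTU, coeff_C_mul, PP_coeff, mul_one]
  clear_value e
  clear he
  rcases hb.eq_or_lt with hb0 | hb0
  · subst hb0
    have hh := step_zero m k hm hk T hT c d A (-X * G) hcd hD hBd h1
    refine prec_gcd e f' g' (C k * A - X * C m * (A + C k * G)) (A + C k * G) he0 ?_ ?_ ?_
    · rw [hf', hg', hf, hg]; simp; ring
    · rw [hg', hf, hg]; simp; ring
    · convert hh using 1 <;> ring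
  · by_cases hr : k / b ∈ T
    · have hh := prec_add m hm _ _ (step_old k b hk hb0 T c d A (-X * G) hcd hD hBd hBc h1 hr)
      set A1 := C c * PP (T.erase (k/b)) with hA1
      have hAA : A = (X - C (k/b)) * A1 := by
        rw [hD, hA1, PP, PP, ← Finset.mul_prod_erase T _ hr]; ring
      have hp : (C k - X * C b) = C (-b) * (X - C (k / b)) := by
        have : k = b * (k / b) := by field_simp
        conv_lhs => rw [this]
        rw [C_mul, C_neg]; ring
      refine prec_gcd (e * (X - C (k/b))) f' g' (C (-b) * A - X * C m * (A1 + C (-b) * G))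
        (A1 + C (-b) * G) (mul_ne_zero he0 (X_sub_C_ne_zero _)) ?_ ?_ ?_
      · rw [hf', hg', hp, hf, hg, hAA]; ring
      · rw [hg', hp, hf, hg, hAA]; ring
      · convert hh using 1 <;> ring
    · have hh := prec_add m hm _ _ (step_new k b hk hb0 T c d A (-X * G) hcd hD hBd hBc h1 hr)
      refine prec_gcd e f' g' ((C k - X * C b) * A - X * C m * (A + (C k - X * C b) * G))
        (A + (C k - X * C b) * G) he0 ?_ ?_ ?_
      · rw [hf', hg', hf, hg]; ring
      · rw [hg', hf, hg]; ring
      · convert hh using 1 <;> ring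

end main_part

/-- Lemma `two` (main part): the interlacing property propagates from step `j`
to step `j+1`. Here `gcd` is the monic-normalized gcd in `ℝ[λ]`. -/
theorem stmt_4 (n : ℕ) (m k b : ℕ → ℝ)
    (hm : ∀ j, 1 ≤ j → j ≤ n → 0 < m j)
    (hk : ∀ j, 1 ≤ j → j ≤ n → 0 < k j)
    (hb : ∀ j, 1 ≤ j → j ≤ n → 0 ≤ b j)
    (j : ℕ) (hj1 : 1 ≤ j) (hj2 : j ≤ n - 1)
    (hyp : Prec (-Polynomial.X * gpoly m k b j / gcd (fpoly m k b j) (gpoly m k b j))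
      (fpoly m k b j / gcd (fpoly m k b j) (gpoly m k b j))) :
    Prec
      (-Polynomial.X * gpoly m k b (j + 1) /
        gcd (fpoly m k b (j + 1)) (gpoly m k b (j + 1)))
      (fpoly m k b (j + 1) / gcd (fpoly m k b (j + 1)) (gpoly m k b (j + 1))) := by
  obtain ⟨i, rfl⟩ : ∃ i, j = i + 1 := ⟨j - 1, by omega⟩
  obtain ⟨h1, h2⟩ := g_rec m k b i
  exact abs_step (m (i+2)) (k (i+2)) (b (i+2)) (hm _ (by omega) (by omega))
    (hk _ (by omega) (by omega)) (hb _ (by omega) (by omega)) _ _ _ _ h1 h2 hyp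
end
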